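/- Let a ∈ ℝ and let b = 8πp/q where p, q are coprime integers with p ≠ 0 and 1 ≤ q ≤ 5. Write p² = 2^{α₀} · p₁^{α₁} ⋯ p_s^{α_s} · q₁^{β₁} ⋯ q_t^{β_t}, where the p_i are distinct primes ≡ 3 (mod 4) and the q_j are distinct primes ≡ 1 (mod 4). Then the ℂ-vector space 𝒮(a,b) is finite-dimensional and its dimension equals 4·(β₁+1)(β₂+1)⋯(β_t+1) if q = 1; 2·(β₁+1)(β₂+1)⋯(β_t+1) if q = 2; and (β₁+1)(β₂+1)⋯(β_t+1) if q ∈ {3,4,5}. -/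

import Mathlib

/-!
Every function in sight is expanded into Fourier modes of frequency `k` in `t` and `n` in `z`; the modes
are smooth functions of `(x, y)`, periodic in `y` and multiplied by `exp(-2πi n y)` under `x ↦ x + 1`.

*Modes with `n ≠ 0` vanish* (`mode_zero`). For the modes `φ, γ` of `f, g` the system says that two
first-order operators `A` and `B`, adjoint to each other and with `AB = BA - 4πn`, exchange `φ + γ`
and `φ - γ` up to scalars. So `φ + γ` is an eigenvector of `BA`, whose eigenvalue is `-(μ² + c²)` with
`μ = 2πk - i b / 4` and `c = 2πn / b`. The ladder argument for the harmonic oscillator (`ladder`,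
`lad_spectrum`) shows that the eigenvalues of `BA` are integer multiples of `4πn`. For `b = 8πp/q` this
forces `k = 0` and makes `π` a root of a quadratic polynomial with integer coefficients, which is excluded
by irrationality of `π` and a case of Lindemann's theorem (`pi_not_quadratic`).

*Modes with `n = 0`* are functions on the `(x, y)`-torus. Their Fourier coefficients at the frequency
`(l, m)` satisfy a `2 × 2` linear system with constant coefficients, which is singular exactly when
`k = 0` and `q (l² + m²) = 2 p l`, and then has a one-dimensional kernel (`kernel_line`). Hence the
dimension is the number of integral solutions `(l, m)` of this equation (`hasDim_sol`).

*Counting.* These solutions correspond to the Gaussian integers `z = (q l - p) + i q m` of norm `p²`. For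
`1 ≤ q ≤ 5` the congruence conditions on `z` single out all, one half, or one quarter of the elements of
norm `p²` for `q = 1`, `q = 2`, `q ≥ 3` respectively (`ncard_freq`), and there are `4 ∏ (βⱼ + 1)` elements of
norm `p²` by factorization in `ℤ[i]` (`ncard_normSet_sq`).
-/

open Complex MeasureTheory

noncomputable section

/-- Functions of four real variables `(t, x, y, z)` with complex values. -/
abbrev F4 : Type := ℝ → ℝ → ℝ → ℝ → ℂ

/-- Smoothness of a function of four real variables. -/
def Smooth4 (f : F4) : Prop :=
  ContDiff ℝ (⊤ : ℕ∞) (fun p : ℝ × ℝ × ℝ × ℝ => f p.1 p.2.1 p.2.2.1 p.2.2.2)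

/-- The invariance properties identifying smooth functions on `ℝ⁴` with smooth
functions on the Kodaira–Thurston manifold `KT⁴`. -/
def KTPeriodic (f : F4) : Prop :=
  ∀ t x y z : ℝ,
    f (t + 1) x y z = f t x y z ∧
    f t (x + 1) y (z + y) = f t x y z ∧
    f t x (y + 1) z = f t x y z ∧
    f t x y (z + 1) = f t x y z

/-- Partial derivative in `t`. -/
def pT (f : F4) (t x y z : ℝ) : ℂ := deriv (fun s => f s x y z) t
/-- Partial derivative in `x`. -/
def pX (f : F4) (t x y z : ℝ) : ℂ := deriv (fun s => f t s y z) x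
/-- Partial derivative in `y`. -/
def pY (f : F4) (t x y z : ℝ) : ℂ := deriv (fun s => f t x s z) y
/-- Partial derivative in `z`. -/
def pZ (f : F4) (t x y z : ℝ) : ℂ := deriv (fun s => f t x y s) z

/-- The vector field `V₁ = (1/2)(∂/∂t − i ∂/∂x)`. -/
def V₁ (f : F4) (t x y z : ℝ) : ℂ :=
  (1 / 2) * (pT f t x y z - Complex.I * pX f t x y z)

/-- The conjugate vector field `V̄₁ = (1/2)(∂/∂t + i ∂/∂x)`. -/
def V₁c (f : F4) (t x y z : ℝ) : ℂ :=
  (1 / 2) * (pT f t x y z + Complex.I * pX f t x y z)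

/-- The vector field `V₂ = (1/2)(∂/∂y + x ∂/∂z − ((a−i)/b) ∂/∂z)`. -/
def V₂ (a b : ℝ) (f : F4) (t x y z : ℝ) : ℂ :=
  (1 / 2) * (pY f t x y z + (x : ℂ) * pZ f t x y z -
    (((a : ℂ) - Complex.I) / (b : ℂ)) * pZ f t x y z)

/-- The conjugate vector field `V̄₂ = (1/2)(∂/∂y + x ∂/∂z − ((a+i)/b) ∂/∂z)`. -/
def V₂c (a b : ℝ) (f : F4) (t x y z : ℝ) : ℂ :=
  (1 / 2) * (pY f t x y z + (x : ℂ) * pZ f t x y z -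
    (((a : ℂ) + Complex.I) / (b : ℂ)) * pZ f t x y z)

/-- The space `𝒮(a,b)` of pairs `(f,g)` of smooth KT-periodic functions satisfying
`−V̄₂(f) + V̄₁(g) + (b/4)g = 0` and `V₁(f) + V₂(g) = 0`. -/
def Sol (a b : ℝ) : Set (F4 × F4) :=
  {fg | Smooth4 fg.1 ∧ Smooth4 fg.2 ∧ KTPeriodic fg.1 ∧ KTPeriodic fg.2 ∧
    (∀ t x y z : ℝ,
      -V₂c a b fg.1 t x y z + V₁c fg.2 t x y z + ((b : ℂ) / 4) * fg.2 t x y z = 0) ∧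
    (∀ t x y z : ℝ, V₁ fg.1 t x y z + V₂ a b fg.2 t x y z = 0)}

/-- `S` is a `ℂ`-subspace of dimension exactly `n`: there are `n` linearly independent
elements whose span is exactly `S`. -/
def HasDimOver {V : Type*} [AddCommGroup V] [Module ℂ V] (S : Set V) (n : ℕ) : Prop :=
  ∃ v : Fin n → V, LinearIndependent ℂ v ∧
    (Submodule.span ℂ (Set.range v) : Set V) = S

end

open scoped BigOperators

/-! ### Gaussian integers of given norm -/

/-- The set of Gaussian integers of norm `M`. -/
def normSet (M : ℕ) : Set GaussianInt := {z | z.norm = (M : ℤ)}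

theorem gauss_norm (z : GaussianInt) : z.norm = z.re ^ 2 + z.im ^ 2 := by
  rw [Zsqrtd.norm_def]; ring

theorem int_abs_le_sq (u : ℤ) : |u| ≤ u ^ 2 := by
  rcases eq_or_ne u 0 with rfl | h
  · simp
  · have := Int.one_le_abs h
    rw [← sq_abs]; nlinarith

theorem normSet_finite (M : ℕ) : (normSet M).Finite := by
  have hinj : Function.Injective (fun z : GaussianInt => (z.re, z.im)) := by
    intro z w h
    simp only [Prod.mk.injEq] at h
    exact Zsqrtd.ext h.1 h.2
  refine Set.Finite.of_finite_image (f := fun z : GaussianInt => (z.re, z.im)) ?_ hinj.injOn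
  refine Set.Finite.subset (Set.finite_Icc ((-M, -M) : ℤ × ℤ) (M, M)) ?_
  rintro _ ⟨z, hz, rfl⟩
  have hz' : z.re ^ 2 + z.im ^ 2 = M := by rw [← gauss_norm]; exact hz
  have h1 : |z.re| ≤ M := by
    have := int_abs_le_sq z.re
    nlinarith [sq_nonneg z.im]
  have h2 : |z.im| ≤ M := by
    have := int_abs_le_sq z.im
    nlinarith [sq_nonneg z.re]
  rw [abs_le] at h1 h2
  exact ⟨⟨h1.1, h2.1⟩, ⟨h1.2, h2.2⟩⟩

/-- Multiplication by `w`, of norm `c`, is a bijection from the elements of norm `M` onto the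
multiples of `w` of norm `c M`. -/
theorem ncard_dvd_normSet (w : GaussianInt) (c M : ℕ) (hc : 0 < c) (hw : w.norm = c) :
    {z ∈ normSet (c * M) | w ∣ z}.ncard = (normSet M).ncard := by
  have hw0 : w ≠ 0 := by rintro rfl; simp at hw; omega
  rw [← Set.ncard_image_of_injective (normSet M) (mul_right_injective₀ hw0)]
  congr 1
  ext z
  simp only [normSet, Set.mem_ofPred_eq, Set.mem_image]
  have hcZ : (c : ℤ) ≠ 0 := by positivity
  constructor
  · rintro ⟨h, v, rfl⟩
    refine ⟨v, ?_, rfl⟩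
    rw [Zsqrtd.norm_mul, hw] at h
    push_cast at h
    exact mul_left_cancel₀ hcZ h
  · rintro ⟨v, h, rfl⟩
    refine ⟨?_, dvd_mul_right _ _⟩
    rw [Zsqrtd.norm_mul, hw, h]; push_cast; ring

theorem ncard_normSet_mul (w : GaussianInt) (c M : ℕ) (hc : 0 < c) (hw : w.norm = c)
    (h : ∀ z ∈ normSet (c * M), w ∣ z) : (normSet (c * M)).ncard = (normSet M).ncard := by
  rw [← ncard_dvd_normSet w c M hc hw]
  congr 1
  ext z; exact ⟨fun hz => ⟨hz, h z hz⟩, fun hz => hz.1⟩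

/-- Every Gaussian integer of even norm is divisible by `1 + i`. -/
theorem ncard_normSet_two (M : ℕ) : (normSet (2 * M)).ncard = (normSet M).ncard := by
  refine ncard_normSet_mul ⟨1, 1⟩ 2 M (by norm_num) (by decide) ?_
  intro z hz
  have hz' : z.re ^ 2 + z.im ^ 2 = 2 * M := by
    rw [← gauss_norm]; exact_mod_cast hz
  have he : (z.re + z.im) % 2 = 0 := by
    have : (z.re + z.im) ^ 2 % 2 = 0 := by
      have : (z.re + z.im) ^ 2 = 2 * (M + z.re * z.im) := by linarith
      rw [this]; simp
    exact Int.emod_eq_zero_of_dvd (Int.prime_two.dvd_of_dvd_pow (Int.dvd_of_emod_eq_zero this))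
  obtain ⟨k, hk⟩ := Int.dvd_of_emod_eq_zero he
  refine ⟨⟨k, z.im - k⟩, ?_⟩
  ext
  · simp; omega
  · simp

theorem ncard_normSet_two_pow (α M : ℕ) : (normSet (2 ^ α * M)).ncard = (normSet M).ncard := by
  induction α with
  | zero => simp
  | succ n ih => rw [pow_succ', mul_assoc, ncard_normSet_two, ih]

theorem dvd_of_three_mod_four {P : ℕ} (hP : P.Prime) (h3 : P % 4 = 3) {z : GaussianInt}
    (h : (P : ℤ) ∣ z.norm) : (P : GaussianInt) ∣ z := by
  have := Fact.mk hP
  have hpr : Prime (P : GaussianInt) := GaussianInt.prime_of_nat_prime_of_mod_four_eq_three P h3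
  have h1 : (P : GaussianInt) ∣ z * star z := by
    rw [← Zsqrtd.norm_eq_mul_conj]
    obtain ⟨k, hk⟩ := h
    exact ⟨k, by rw [hk]; push_cast; ring⟩
  rcases hpr.dvd_or_dvd h1 with h | ⟨k, hk⟩
  · exact h
  · refine ⟨star k, ?_⟩
    have := congrArg star hk
    rw [star_star, star_mul'] at this
    simpa using this

/-- A prime `P ≡ 3 (mod 4)` is inert, so `P` divides every element whose norm is divisible by `P`.
The count therefore vanishes for odd `α`, and is unaffected by `P ^ α` for even `α`. -/
theorem ncard_normSet_three {P : ℕ} (hP : P.Prime) (h3 : P % 4 = 3) (M : ℕ) (hM : ¬ P ∣ M)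
    (α : ℕ) : (normSet (P ^ α * M)).ncard = (normSet M).ncard ∨
      (normSet (P ^ α * M)).ncard = 0 := by
  induction α using Nat.twoStepInduction with
  | zero => left; simp
  | one =>
    right
    rw [Set.ncard_eq_zero (normSet_finite _)]
    rw [Set.eq_empty_iff_forall_notMem]
    intro z hz
    have hz' : z.norm = ((P ^ 1 * M : ℕ) : ℤ) := hz
    obtain ⟨w, rfl⟩ := dvd_of_three_mod_four hP h3 (z := z) (by rw [hz']; push_cast; simp)
    rw [Zsqrtd.norm_mul, Zsqrtd.norm_natCast] at hz'
    apply hM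
    have hP0 : (P : ℤ) ≠ 0 := by exact_mod_cast hP.ne_zero
    have : (P : ℤ) * w.norm = M := by
      apply mul_left_cancel₀ hP0; push_cast at hz'; linarith
    exact Int.natCast_dvd_natCast.1 ⟨_, this.symm⟩
  | more n ih1 ih2 =>
    have : (normSet (P ^ (n + 2) * M)).ncard = (normSet (P ^ n * M)).ncard := by
      rw [show P ^ (n + 2) * M = P ^ 2 * (P ^ n * M) by ring]
      refine ncard_normSet_mul (P : GaussianInt) _ _ (pow_pos hP.pos 2) ?_ ?_
      · rw [Zsqrtd.norm_natCast]; push_cast; ring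
      · intro z hz
        refine dvd_of_three_mod_four hP h3 ?_
        have hz' : z.norm = ((P ^ 2 * (P ^ n * M) : ℕ) : ℤ) := hz
        rw [hz']; push_cast
        exact ⟨P * (P ^ n * M), by ring⟩
    rw [this]; exact ih1

theorem ncard_normSet_one : (normSet 1).ncard = 4 := by
  have : normSet 1 = (({⟨1, 0⟩, ⟨-1, 0⟩, ⟨0, 1⟩, ⟨0, -1⟩} : Finset GaussianInt) :
      Set GaussianInt) := by
    ext z
    simp only [normSet, Set.mem_ofPred_eq, gauss_norm, Finset.coe_insert, Finset.coe_singleton,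
      Set.mem_insert_iff, Set.mem_singleton_iff, Zsqrtd.ext_iff, Nat.cast_one]
    constructor
    · intro h
      have h1 : z.re ≤ 1 := by nlinarith [sq_nonneg z.im]
      have h2 : -1 ≤ z.re := by nlinarith [sq_nonneg z.im]
      have h3 : z.im ≤ 1 := by nlinarith [sq_nonneg z.re]
      have h4 : -1 ≤ z.im := by nlinarith [sq_nonneg z.re]
      generalize z.re = u at *
      generalize z.im = v at *
      interval_cases u <;> interval_cases v <;> simp_all
    · rintro (h | h | h | h) <;> rw [h.1, h.2] <;> norm_num
  rw [this, Set.ncard_coe_finset]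
  decide

/-- Inclusion–exclusion over the two Gaussian primes above a rational prime `P ≡ 1 (mod 4)`: every
element of norm divisible by `P` is divisible by one of them, and by both exactly when it is divisible
by `P`. -/
theorem ncard_normSet_split {P : ℕ} (hP : P.Prime) (h1 : P % 4 = 1) :
    (∀ M, ¬ P ∣ M → (normSet (P * M)).ncard = 2 * (normSet M).ncard) ∧
    ∀ M, (normSet (P * (P * M))).ncard + (normSet M).ncard = 2 * (normSet (P * M)).ncard := by
  have := Fact.mk hP
  obtain ⟨a, b, hab⟩ := Nat.Prime.sq_add_sq (p := P) (by omega)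
  have habZ : (a : ℤ) ^ 2 + (b : ℤ) ^ 2 = P := by exact_mod_cast hab
  set w : GaussianInt := ⟨a, b⟩ with hw
  set w' : GaussianInt := ⟨a, -b⟩ with hw'
  have hn : w.norm = (P : ℤ) := by rw [gauss_norm, hw]; exact habZ
  have hn' : w'.norm = (P : ℤ) := by rw [gauss_norm, hw']; simpa using habZ
  have hww : w * w' = (P : GaussianInt) := by
    ext
    · simp [hw, hw']; linarith
    · simp [hw, hw']; ring
  have hprime : ∀ v : GaussianInt, v.norm = P → Prime v := by
    intro v hv
    rw [← irreducible_iff_prime, irreducible_iff]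
    constructor
    · intro hu
      rw [← Zsqrtd.norm_eq_one_iff, hv] at hu
      have := hP.one_lt
      simp at hu; omega
    · intro x y hxy
      rw [← Zsqrtd.norm_eq_one_iff, ← Zsqrtd.norm_eq_one_iff]
      have h : x.norm.natAbs * y.norm.natAbs = P := by
        rw [← Int.natAbs_mul, ← Zsqrtd.norm_mul, ← hxy, hv]; simp
      rcases Nat.prime_mul_iff.1 (h ▸ hP) with ⟨_, h⟩ | ⟨_, h⟩
      · exact Or.inr h
      · exact Or.inl h
  have hwp := hprime w hn
  have hwp' := hprime w' hn'
  have hPodd : P ≠ 2 := by omega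
  have hnd : ¬ w' ∣ w := by
    intro h
    have h2 : w' ∣ ((2 * a : ℕ) : GaussianInt) := by
      have : ((2 * a : ℕ) : GaussianInt) = w + w' := by
        ext
        · simp [hw, hw']; ring
        · simp [hw, hw']
      rw [this]; exact dvd_add h dvd_rfl
    obtain ⟨v, hv⟩ := h2
    have h3 := congrArg Zsqrtd.norm hv
    rw [Zsqrtd.norm_mul, hn', Zsqrtd.norm_natCast] at h3
    have h4 : P ∣ (2 * a) * (2 * a) := Int.natCast_dvd_natCast.1 ⟨v.norm, by push_cast at h3 ⊢; exact h3⟩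
    have h5 : P ∣ 2 * a := by rcases hP.dvd_mul.1 h4 with h | h <;> exact h
    have h6 : P ∣ a := by
      rcases hP.dvd_mul.1 h5 with h | h
      · exact absurd ((Nat.prime_dvd_prime_iff_eq hP Nat.prime_two).1 h) hPodd
      · exact h
    have h7 : P ∣ b := by
      have : P ∣ b ^ 2 := by
        rw [← Nat.dvd_add_right (dvd_pow h6 two_ne_zero), hab]
      exact hP.dvd_of_dvd_pow this
    obtain ⟨a', rfl⟩ := h6
    obtain ⟨b', rfl⟩ := h7
    have h8 : P * (a' ^ 2 + b' ^ 2) = 1 := by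
      apply Nat.eq_of_mul_eq_mul_left hP.pos; linarith
    exact hP.one_lt.ne' (Nat.eq_one_of_mul_eq_one_right h8)
  have hunion : ∀ M, normSet (P * M) =
      {z ∈ normSet (P * M) | w ∣ z} ∪ {z ∈ normSet (P * M) | w' ∣ z} := by
    intro M
    ext z
    constructor
    · intro hz
      have hz' : z.norm = ((P * M : ℕ) : ℤ) := hz
      have h1 : w ∣ z * star z := by
        rw [← Zsqrtd.norm_eq_mul_conj, hz']
        push_cast
        rw [← hww, mul_assoc]; exact dvd_mul_right _ _
      rcases hwp.dvd_or_dvd h1 with h | ⟨k, hk⟩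
      · exact Or.inl ⟨hz, h⟩
      · refine Or.inr ⟨hz, star k, ?_⟩
        have := congrArg star hk
        rw [star_star, star_mul'] at this
        rw [this]; congr 1
    · rintro (h | h) <;> exact h.1
  have hinter : ∀ M, {z ∈ normSet (P * M) | w ∣ z} ∩ {z ∈ normSet (P * M) | w' ∣ z} =
      {z ∈ normSet (P * M) | (P : GaussianInt) ∣ z} := by
    intro M
    ext z
    constructor
    · rintro ⟨⟨hz, v, rfl⟩, -, h⟩
      refine ⟨hz, ?_⟩
      rcases hwp'.dvd_or_dvd h with h | h
      · exact absurd h hnd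
      · rw [← hww]; exact mul_dvd_mul_left _ h
    · rintro ⟨hz, h⟩
      rw [← hww] at h
      exact ⟨⟨hz, (dvd_mul_right _ _).trans h⟩, hz, (dvd_mul_left _ _).trans h⟩
  have hfin : ∀ M (Q : GaussianInt → Prop), {z ∈ normSet M | Q z}.Finite := fun M Q =>
    (normSet_finite M).subset (fun z hz => hz.1)
  have hie : ∀ M, (normSet (P * M)).ncard +
      {z ∈ normSet (P * M) | (P : GaussianInt) ∣ z}.ncard = 2 * (normSet M).ncard := by
    intro M
    have := Set.ncard_union_add_ncard_inter {z ∈ normSet (P * M) | w ∣ z}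
      {z ∈ normSet (P * M) | w' ∣ z} (hfin _ _) (hfin _ _)
    rw [← hunion, hinter, ncard_dvd_normSet w P M hP.pos hn,
      ncard_dvd_normSet w' P M hP.pos hn'] at this
    omega
  constructor
  · intro M hM
    have h0 : {z ∈ normSet (P * M) | (P : GaussianInt) ∣ z} = ∅ := by
      rw [Set.eq_empty_iff_forall_notMem]
      rintro _ ⟨hz, v, rfl⟩
      have hz' : ((P : GaussianInt) * v).norm = ((P * M : ℕ) : ℤ) := hz
      rw [Zsqrtd.norm_mul, Zsqrtd.norm_natCast] at hz'
      apply hM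
      have hP0 : (P : ℤ) ≠ 0 := by exact_mod_cast hP.ne_zero
      have : (P : ℤ) * v.norm = M := by
        apply mul_left_cancel₀ hP0; push_cast at hz'; linarith
      exact Int.natCast_dvd_natCast.1 ⟨_, this.symm⟩
    have := hie M
    rw [h0] at this; simpa using this
  · intro M
    have := hie (P * M)
    rwa [← mul_assoc, ncard_dvd_normSet (P : GaussianInt) (P * P) M (Nat.mul_pos hP.pos hP.pos)
      (by rw [Zsqrtd.norm_natCast]; push_cast; ring), mul_assoc] at this

/-- A split prime contributes the factor `β + 1`: by `ncard_normSet_split` the counts satisfy the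
recursion `r (β + 2) - 2 r (β + 1) + r β = 0` with `r 1 = 2 r 0`. -/
theorem ncard_normSet_one_mod_four {P : ℕ} (hP : P.Prime) (h1 : P % 4 = 1) (M : ℕ)
    (hM : ¬ P ∣ M) (β : ℕ) : (normSet (P ^ β * M)).ncard = (β + 1) * (normSet M).ncard := by
  obtain ⟨ha, hb⟩ := ncard_normSet_split hP h1
  induction β using Nat.twoStepInduction with
  | zero => simp
  | one => simpa using ha M hM
  | more n ih1 ih2 =>
    have := hb (P ^ n * M)
    rw [show P * (P * (P ^ n * M)) = P ^ (n + 2) * M by ring,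
      show P * (P ^ n * M) = P ^ (n + 1) * M by ring, ih1, ih2] at this
    have e : (n + 2 + 1) * (normSet M).ncard + (n + 1) * (normSet M).ncard
      = 2 * ((n + 1 + 1) * (normSet M).ncard) := by ring
    omega

theorem not_dvd_prod_pow {ι : Type*} (s : Finset ι) (P : ℕ) (hP : P.Prime) (r e : ι → ℕ)
    (hr : ∀ i ∈ s, (r i).Prime) (hne : ∀ i ∈ s, r i ≠ P) : ¬ P ∣ ∏ i ∈ s, r i ^ e i := by
  intro h
  obtain ⟨i, hi, hd⟩ := (hP.prime.dvd_finsetProd_iff _).1 h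
  exact hne i hi ((Nat.prime_dvd_prime_iff_eq hP (hr i hi)).1 (hP.dvd_of_dvd_pow hd)).symm

/-- Jacobi's two-square count `4 ∏ (β j + 1)` for `p ^ 2`. The alternative “no representation” at
the primes `≡ 3 (mod 4)` does not occur, since `p` itself has norm `p ^ 2`. -/
theorem ncard_normSet_sq (p : ℤ)
    (α₀ s t : ℕ) (pr : Fin s → ℕ) (α : Fin s → ℕ) (qr : Fin t → ℕ) (β : Fin t → ℕ)
    (hprP : ∀ i, Nat.Prime (pr i)) (hpr3 : ∀ i, pr i % 4 = 3)
    (hprInj : Function.Injective pr)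
    (hqrP : ∀ j, Nat.Prime (qr j)) (hqr1 : ∀ j, qr j % 4 = 1)
    (hqrInj : Function.Injective qr)
    (hfact : p ^ 2 =
      2 ^ α₀ * (∏ i, (pr i : ℤ) ^ α i) * ∏ j, (qr j : ℤ) ^ β j) :
    {z : GaussianInt | z.norm = p ^ 2}.ncard = 4 * ∏ j, (β j + 1) := by
  have hq : ∀ S : Finset (Fin t), (normSet (∏ j ∈ S, qr j ^ β j)).ncard = 4 * ∏ j ∈ S, (β j + 1) := by
    intro S
    induction S using Finset.induction_on with
    | empty => simpa using ncard_normSet_one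
    | insert j S hj ih =>
      rw [Finset.prod_insert hj, Finset.prod_insert hj,
        ncard_normSet_one_mod_four (hqrP j) (hqr1 j) _ _ (β j), ih]
      · ring
      · refine not_dvd_prod_pow S _ (hqrP j) _ _ (fun i _ => hqrP i) ?_
        intro i hi h
        exact hj (hqrInj h ▸ hi)
  set Q := ∏ j, qr j ^ β j with hQ
  have hp3 : ∀ S : Finset (Fin s), (normSet ((∏ i ∈ S, pr i ^ α i) * Q)).ncard = (normSet Q).ncard ∨
      (normSet ((∏ i ∈ S, pr i ^ α i) * Q)).ncard = 0 := by
    intro S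
    induction S using Finset.induction_on with
    | empty => simp
    | insert i S hi ih =>
      rw [Finset.prod_insert hi, mul_assoc]
      have hnd : ¬ pr i ∣ (∏ i ∈ S, pr i ^ α i) * Q := by
        rw [(hprP i).dvd_mul]
        rintro (h | h)
        · refine not_dvd_prod_pow S _ (hprP i) _ _ (fun i _ => hprP i) ?_ h
          intro k hk h
          exact hi (hprInj h ▸ hk)
        · refine not_dvd_prod_pow _ _ (hprP i) _ _ (fun i _ => hqrP i) ?_ h
          intro k _ h
          have := hqr1 k
          have := hpr3 i
          omega
      rcases ncard_normSet_three (hprP i) (hpr3 i) _ hnd (α i) with h | h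
      · rw [h]; exact ih
      · exact Or.inr h
  have hset : {z : GaussianInt | z.norm = p ^ 2} =
      normSet (2 ^ α₀ * ((∏ i, pr i ^ α i) * Q)) := by
    ext z
    simp only [normSet, Set.mem_ofPred_eq, hfact, hQ]
    push_cast
    rw [mul_assoc]
  have hne : (normSet (2 ^ α₀ * ((∏ i, pr i ^ α i) * Q))).ncard ≠ 0 := by
    rw [Ne, Set.ncard_eq_zero (normSet_finite _), ← hset]
    refine Set.Nonempty.ne_empty ⟨(p : GaussianInt), ?_⟩
    simp only [Set.mem_ofPred_eq, Zsqrtd.norm_intCast]; ring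
  rw [hset]
  rw [ncard_normSet_two_pow] at hne ⊢
  rcases hp3 Finset.univ with h | h
  · rw [h, hq]
  · exact absurd h hne

/-! ### A case of Lindemann's theorem for `π` -/

open Polynomial in
/-- `π` is not a root of `D X² - β X - γ` with `D, γ > 0` and `β ≠ 0`. This is a case of Lindemann's
theorem, obtained in the classical way. Let `x = π` and let `x'` be the other root. Since
`2 + e^{ix} + e^{-ix} = 0`, expanding `(2 + e^{ix} + e^{-ix}) (2 + e^{ix'} + e^{-ix'}) = 0` gives an
integral relation between the values of `exp` at `±ix`, `±ix'` and `±i(x ± x')`, with constant term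
`4`. These exponents are the roots of an integral polynomial `f` with `f(0) ≠ 0`, so the simultaneous
approximations of `LindemannWeierstrass.exp_polynomial_approx` turn the relation into a nonzero
integer of absolute value less than `1`. -/
theorem pi_not_quadratic (D β γ : ℤ) (hD : 0 < D) (hβ : β ≠ 0) (hγ : 0 < γ)
    (h : (D : ℝ) * Real.pi ^ 2 = β * Real.pi + γ) : False := by
  have hDR : (0 : ℝ) < D := by exact_mod_cast hD
  have hDC : (D : ℂ) ≠ 0 := by exact_mod_cast hD.ne'
  set x : ℂ := (Real.pi : ℂ) with hx
  -- the conjugate root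
  set x' : ℂ := (β : ℂ) / D - x with hx'
  have hxC : (D : ℂ) * x ^ 2 = β * x + γ := by
    rw [hx]; exact_mod_cast h
  have hsum : (D : ℂ) * (x + x') = β := by rw [hx']; field_simp; ring
  have hprod : (D : ℂ) * (x * x') = -γ := by
    linear_combination x * hsum - hxC
  set f : ℤ[X] := (C (D ^ 2) * X ^ 4 + C (β ^ 2 + 2 * D * γ) * X ^ 2 + C (γ ^ 2)) *
    (C (D ^ 2) * X ^ 2 + C (β ^ 2)) * (C (D ^ 2) * X ^ 2 + C (β ^ 2 + 4 * D * γ)) with hf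
  have hβ2 : 0 < β ^ 2 := by positivity
  have hf0 : f.eval 0 ≠ 0 := by
    simp only [hf, eval_mul, eval_add, eval_C, eval_pow, eval_X]
    have h1 : 0 < γ ^ 2 := by positivity
    have h2 : 0 < β ^ 2 + 4 * D * γ := by positivity
    have : 0 < γ ^ 2 * β ^ 2 * (β ^ 2 + 4 * D * γ) := by positivity
    simpa using this.ne'
  have hfne : f ≠ 0 := by rintro h0; rw [h0] at hf0; simp at hf0
  have hdeg : f.natDegree ≤ 8 := by
    rw [hf]; compute_degree
  have hroot : ∀ r : ℂ, aeval r f = 0 → r ∈ f.aroots ℂ := fun r hr =>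
    (mem_aroots).2 ⟨hfne, hr⟩
  have haev : ∀ r : ℂ, aeval r f = (D ^ 2 * r ^ 4 + (β ^ 2 + 2 * D * γ) * r ^ 2 + γ ^ 2) *
      (D ^ 2 * r ^ 2 + β ^ 2) * (D ^ 2 * r ^ 2 + (β ^ 2 + 4 * D * γ)) := by
    intro r
    have h2 : aeval r (2 : ℤ[X]) = 2 := map_ofNat _ 2
    have h4 : aeval r (4 : ℤ[X]) = 4 := map_ofNat _ 4
    simp [hf, h2, h4]
  have hq : ∀ w : ℂ, (D : ℂ) * w ^ 2 = β * w + γ → ∀ ε : ℂ, ε ^ 2 = -1 →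
      aeval (ε * w) f = 0 := by
    intro w hw ε hε
    rw [haev]
    have : (D : ℂ) ^ 2 * (ε * w) ^ 4 + (β ^ 2 + 2 * D * γ) * (ε * w) ^ 2 + γ ^ 2 = 0 := by
      have h4 : ε ^ 4 = 1 := by linear_combination (ε ^ 2 - 1) * hε
      rw [mul_pow, mul_pow, h4, hε]
      linear_combination (D * w ^ 2 + β * w - γ) * hw
    rw [this]; ring
  have hxC' : (D : ℂ) * x' ^ 2 = β * x' + γ := by
    linear_combination x' * hsum - hprod
  have hB : ∀ ε : ℂ, ε ^ 2 = -1 → aeval (ε * (x + x')) f = 0 := by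
    intro ε hε
    rw [haev]
    have : (D : ℂ) ^ 2 * (ε * (x + x')) ^ 2 + β ^ 2 = 0 := by
      rw [mul_pow, hε, ← hsum]; ring
    rw [this]; ring
  have hM : ∀ ε : ℂ, ε ^ 2 = -1 → aeval (ε * (x - x')) f = 0 := by
    intro ε hε
    rw [haev]
    have : (D : ℂ) ^ 2 * (ε * (x - x')) ^ 2 + (β ^ 2 + 4 * D * γ) = 0 := by
      rw [mul_pow, hε, ← hsum]; linear_combination 4 * D * hprod
    rw [this]; ring
  have hI : I ^ 2 = -1 := I_sq
  have hI' : (-I) ^ 2 = -1 := by rw [neg_sq]; exact I_sq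
  -- the linear functional collecting the nonconstant terms of the expanded product
  set Sg : (ℂ → ℂ) → ℂ := fun φ => 2 * φ (I * x) + 2 * φ (-I * x) + 2 * φ (I * x') +
    2 * φ (-I * x') + φ (I * (x + x')) + φ (-I * (x + x')) + φ (I * (x - x')) +
    φ (-I * (x - x')) with hSg
  have hexp : Sg exp = -4 := by
    have e1 : exp (I * x) = -1 := by rw [mul_comm]; exact exp_pi_mul_I
    have e2 : exp (-I * x) = -1 := by
      rw [neg_mul, exp_neg, e1]; norm_num
    simp only [hSg]
    have e3 : exp (I * (x + x')) = - exp (I * x') := by rw [mul_add, exp_add, e1]; ring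
    have e4 : exp (-I * (x + x')) = - exp (-I * x') := by rw [mul_add, exp_add, e2]; ring
    have e5 : exp (I * (x - x')) = - exp (-I * x') := by
      rw [show I * (x - x') = I * x + -I * x' by ring, exp_add, e1]; ring
    have e6 : exp (-I * (x - x')) = - exp (I * x') := by
      rw [show -I * (x - x') = -I * x + I * x' by ring, exp_add, e2]; ring
    rw [e1, e2, e3, e4, e5, e6]; ring
  -- `D x` and `D x'` are conjugate algebraic integers, so their power sums are integers
  have hpow2 : ∀ m : ℕ, (∃ K : ℤ, (D * x) ^ m + (D * x') ^ m = (K : ℂ)) ∧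
      ∃ K : ℤ, (D * x) ^ (m + 1) + (D * x') ^ (m + 1) = (K : ℂ) := by
    intro m
    induction m with
    | zero => exact ⟨⟨2, by norm_num⟩, ⟨β, by linear_combination hsum⟩⟩
    | succ m ih =>
      obtain ⟨⟨K, hK⟩, L, hL⟩ := ih
      refine ⟨⟨L, hL⟩, ⟨β * L + D * γ * K, ?_⟩⟩
      push_cast
      rw [← hK, ← hL]
      linear_combination ((D:ℂ) * (D * x) ^ m) * hxC + (D * (D * x') ^ m) * hxC'
  have hpow : ∀ m : ℕ, ∃ K : ℤ, Sg (fun r => (D * r) ^ m) = (K : ℂ) := by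
    intro m
    obtain ⟨K, hK⟩ := (hpow2 m).1
    simp only [hSg]
    rcases Nat.even_or_odd m with ⟨s, hs⟩ | hodd
    · have hs2 : m = 2 * s := by omega
      refine ⟨(-1) ^ s * (4 * K + 2 * β ^ m + 2 * (β ^ 2 + 4 * D * γ) ^ s), ?_⟩
      push_cast
      rw [← hK]
      have h1 : ∀ w : ℂ, (D * (I * w)) ^ m = (-1) ^ s * (D * w) ^ m := by
        intro w; rw [show (D : ℂ) * (I * w) = I * (D * w) by ring, mul_pow, hs2, pow_mul I, hI]
      have h2 : ∀ w : ℂ, (D * (-I * w)) ^ m = (-1) ^ s * (D * w) ^ m := by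
        intro w; rw [show (D : ℂ) * (-I * w) = (-I) * (D * w) by ring, mul_pow, hs2, pow_mul (-I),
          hI']
      have h3 : ((D : ℂ) * (x - x')) ^ m = (β ^ 2 + 4 * D * γ) ^ s := by
        rw [hs2, pow_mul]; congr 1
        rw [← hsum]; linear_combination (-4) * D * hprod
      simp only [h1, h2, h3, hsum]
      ring
    · refine ⟨0, ?_⟩
      have h2 : ∀ w : ℂ, (D * (-I * w)) ^ m = -(D * (I * w)) ^ m := by
        intro w; rw [show (D : ℂ) * (-I * w) = -(D * (I * w)) by ring, hodd.neg_pow]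
      simp only [h2]; push_cast; ring
  have hintegral : ∀ (gp : ℤ[X]) (M : ℕ), gp.natDegree ≤ M →
      ∃ K : ℤ, (D : ℂ) ^ M * Sg (fun r => aeval r gp) = K := by
    intro gp M hM
    choose Kf hKf using hpow
    refine ⟨∑ m ∈ Finset.range (M + 1), gp.coeff m * D ^ (M - m) * Kf m, ?_⟩
    have hexpand : ∀ r : ℂ, (D : ℂ) ^ M * aeval r gp =
        ∑ m ∈ Finset.range (M + 1), (gp.coeff m * D ^ (M - m) : ℂ) * (D * r) ^ m := by
      intro r
      rw [aeval_eq_sum_range' (Nat.lt_succ_of_le hM), Finset.mul_sum]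
      refine Finset.sum_congr rfl fun m hm => ?_
      have : M = (M - m) + m := by have := Finset.mem_range.1 hm; omega
      conv_lhs => rw [this]
      rw [zsmul_eq_mul, pow_add, mul_pow]; ring
    have hlin : (D : ℂ) ^ M * Sg (fun r => aeval r gp) = Sg (fun r => (D : ℂ) ^ M * aeval r gp) := by
      simp only [hSg]; ring
    rw [hlin]
    simp only [hexpand]
    push_cast
    simp only [← hKf, hSg, Finset.mul_sum, ← Finset.sum_add_distrib]
    refine Finset.sum_congr rfl fun m _ => ?_
    ring
  obtain ⟨c, hc⟩ := LindemannWeierstrass.exp_polynomial_approx f hf0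
  -- a prime `P` beyond this threshold makes the error term smaller than `1` and is coprime to `4 D`
  have hlim : Filter.Tendsto (fun n : ℕ => 12 * (D ^ 8 * |c|) * ((D ^ 8 * |c|) ^ n / (n.factorial : ℝ)))
      Filter.atTop (nhds 0) := by
    simpa using (FloorSemiring.tendsto_pow_div_factorial_atTop ((D : ℝ) ^ 8 * |c|)).const_mul
      (12 * (D ^ 8 * |c|))
  obtain ⟨n0, hn0⟩ := Filter.eventually_atTop.1 (hlim.eventually (gt_mem_nhds one_pos))
  obtain ⟨P, hPge, hP⟩ := Nat.exists_infinite_primes (n0 + 1 + (eval 0 f).natAbs + 1 + 5 + D.natAbs + 1)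
  obtain ⟨n, hn, gp, hgp, happ⟩ := hc P (by omega) hP
  obtain ⟨K, hK⟩ := hintegral gp (8 * P) (by
    have : P * f.natDegree ≤ P * 8 := Nat.mul_le_mul_left _ hdeg
    omega)
  have hne : n * 4 * D ^ (8 * P) + P * K ≠ 0 := by
    intro h0
    have hdv : (P : ℤ) ∣ n * 4 * D ^ (8 * P) :=
      ⟨-K, by linear_combination h0⟩
    have hPp : Prime (P : ℤ) := Nat.prime_iff_prime_int.1 hP
    rcases hPp.dvd_or_dvd hdv with h1 | h1
    · rcases hPp.dvd_or_dvd h1 with h2 | h2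
      · exact hn h2
      · have := Int.le_of_dvd (by norm_num) h2; omega
    · have := Int.le_of_dvd hD (hPp.dvd_of_dvd_pow h1); omega
  have hge : (1 : ℝ) ≤ ‖((n * 4 * D ^ (8 * P) + P * K : ℤ) : ℂ)‖ := by
    rw [Complex.norm_intCast]
    exact_mod_cast Int.one_le_abs hne
  set e : ℂ → ℂ := fun r => n • exp r - P • aeval r gp with he
  have hSe : ((n * 4 * D ^ (8 * P) + P * K : ℤ) : ℂ) = -(D ^ (8 * P) * Sg e) := by
    push_cast
    rw [← hK]
    have h1 : Sg e = n * Sg exp - P * Sg (fun r => aeval r gp) := by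
      simp only [hSg, he, zsmul_eq_mul, nsmul_eq_mul]; ring
    rw [h1, hexp]; ring
  have hb : ∀ r, aeval r f = 0 → ‖e r‖ ≤ |c| ^ P / ((P - 1).factorial : ℝ) := by
    intro r hr
    refine (happ (hroot r hr)).trans ?_
    refine div_le_div_of_nonneg_right ?_ (by positivity)
    rw [← abs_pow]; exact le_abs_self _
  set E := |c| ^ P / ((P - 1).factorial : ℝ) with hE
  have hSb : ‖Sg e‖ ≤ 12 * E := by
    have b1 := hb _ (hq x hxC I hI)
    have b2 := hb _ (hq x hxC (-I) hI')
    have b3 := hb _ (hq x' hxC' I hI)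
    have b4 := hb _ (hq x' hxC' (-I) hI')
    have b5 := hb _ (hB I hI)
    have b6 := hb _ (hB (-I) hI')
    have b7 := hb _ (hM I hI)
    have b8 := hb _ (hM (-I) hI')
    simp only [hSg]
    have t2 : ∀ w : ℂ, ‖2 * w‖ = 2 * ‖w‖ := by intro w; simp
    refine (norm_add_le _ _).trans ?_
    refine (add_le_add_left (norm_add_le _ _) _).trans ?_
    refine (add_le_add_left (add_le_add_left (norm_add_le _ _) _) _).trans ?_
    refine (add_le_add_left (add_le_add_left (add_le_add_left (norm_add_le _ _) _) _) _).trans ?_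
    have c1 := norm_add_le (2 * e (I * x) + 2 * e (-I * x) + 2 * e (I * x')) (2 * e (-I * x'))
    have c2 := norm_add_le (2 * e (I * x) + 2 * e (-I * x)) (2 * e (I * x'))
    have c3 := norm_add_le (2 * e (I * x)) (2 * e (-I * x))
    simp only [t2] at c1 c2 c3
    linarith
  have hfin := hn0 (P - 1) (by omega)
  have hP1 : P = (P - 1) + 1 := by omega
  have : (1 : ℝ) ≤ 12 * (D ^ 8 * |c|) * ((D ^ 8 * |c|) ^ (P - 1) / ((P - 1).factorial : ℝ)) := by
    calc (1 : ℝ) ≤ ‖((n * 4 * D ^ (8 * P) + P * K : ℤ) : ℂ)‖ := hge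
      _ = D ^ (8 * P) * ‖Sg e‖ := by
        rw [hSe, norm_neg, norm_mul, norm_pow, Complex.norm_intCast, abs_of_pos hDR]
      _ ≤ D ^ (8 * P) * (12 * E) := by gcongr
      _ = _ := by
        rw [hE, pow_mul]
        conv_lhs => rw [hP1]
        simp only [Nat.add_sub_cancel, pow_succ, mul_pow]
        ring
  linarith

/-! ### Resonant frequencies -/

/-- The resonant frequencies: the pairs `(l, m)` of frequencies in `(x, y)` at which the
constant-coefficient system satisfied by the Fourier coefficients independent of `t` and `z` is
singular. -/
def freq (p q : ℤ) : Set (ℤ × ℤ) := {c | q * (c.2 ^ 2 + c.1 ^ 2) = 2 * p * c.1}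

/-- Multiplying the equation of `freq p q` by `q` and completing the square, `(l, m)` is resonant if
and only if `z = (q l - p) + i q m` has norm `p ^ 2`; so `freq p q` is in bijection with the set `T` of
Gaussian integers of norm `p ^ 2` with `q ∣ im z` and `q ∣ re z + p`. The distinct rotates of `T` by
powers of `i` partition the set of all elements of norm `p ^ 2`: there is one for `q = 1`, there are two for
`q = 2`, and four for `q = 3, 4, 5`. The last case uses that the squares modulo `q` are few enough to
force `q ∣ x` or `q ∣ y` from `x² + y² = p²`. -/
theorem ncard_freq (p q : ℤ) (hcop : IsCoprime p q) (hq1 : 1 ≤ q) (hq5 : q ≤ 5)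
    (R : ℕ) (hR : {z : GaussianInt | z.norm = p ^ 2}.ncard = 4 * R) :
    (freq p q).Finite ∧ (freq p q).ncard = (if q = 1 then 4 else if q = 2 then 2 else 1) * R := by
  have hfinR : {z : GaussianInt | z.norm = p ^ 2}.Finite := by
    have := normSet_finite (p ^ 2).natAbs
    convert this using 2
    ext z
    simp only [normSet, Set.mem_ofPred_eq]
    rw [Int.natAbs_of_nonneg (sq_nonneg p)]
  have hq0 : q ≠ 0 := by omega
  set T : Set GaussianInt := {z | z.norm = p ^ 2 ∧ q ∣ z.im ∧ q ∣ z.re + p} with hT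
  have hTfin : T.Finite := hfinR.subset (fun z hz => hz.1)
  set φ : ℤ × ℤ → GaussianInt := fun c => ⟨q * c.1 - p, q * c.2⟩ with hφ
  have hφinj : Function.Injective φ := by
    rintro ⟨l, m⟩ ⟨l', m'⟩ h
    simp only [hφ, Zsqrtd.ext_iff] at h
    have h1 : q * l = q * l' := by linarith [h.1]
    exact Prod.ext (mul_left_cancel₀ hq0 h1) (mul_left_cancel₀ hq0 h.2)
  have himg : φ '' freq p q = T := by
    ext z
    constructor
    · rintro ⟨⟨l, m⟩, h, rfl⟩
      refine ⟨?_, ⟨m, rfl⟩, ⟨l, by simp [hφ]⟩⟩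
      rw [gauss_norm]
      have h' : q * (m ^ 2 + l ^ 2) = 2 * p * l := h
      simp only [hφ]
      linear_combination q * h'
    · rintro ⟨h, ⟨m, hm⟩, ⟨l, hl⟩⟩
      refine ⟨(l, m), ?_, ?_⟩
      · rw [gauss_norm, hm, show z.re = q * l - p by linarith] at h
        show q * (m ^ 2 + l ^ 2) = 2 * p * l
        apply mul_left_cancel₀ hq0
        linear_combination h
      · ext
        · simp only [hφ]; linarith
        · simp only [hφ]; linarith
  have hcard : (freq p q).ncard = T.ncard := by
    rw [← himg, Set.ncard_image_of_injective _ hφinj]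
  refine ⟨Set.Finite.of_finite_image (himg ▸ hTfin) hφinj.injOn, ?_⟩
  rw [hcard]
  -- images of `T` under multiplication by `i^e`
  set T' : ℕ → Set GaussianInt := fun e => (fun z => (⟨0, 1⟩ : GaussianInt) ^ e * z) '' T with hT'
  have hI0 : (⟨0, 1⟩ : GaussianInt) ≠ 0 := by decide
  have hT'card : ∀ e, (T' e).ncard = T.ncard := fun e =>
    Set.ncard_image_of_injective _ (mul_right_injective₀ (pow_ne_zero e hI0))
  have hT'fin : ∀ e, (T' e).Finite := fun e => hTfin.image _
  have m0 : ∀ x y : ℤ, (⟨x, y⟩ : GaussianInt) ∈ T' 0 ↔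
      x ^ 2 + y ^ 2 = p ^ 2 ∧ q ∣ y ∧ q ∣ x + p := by
    intro x y
    simp [hT', hT, gauss_norm]
  have m1 : ∀ x y : ℤ, (⟨x, y⟩ : GaussianInt) ∈ T' 1 ↔
      x ^ 2 + y ^ 2 = p ^ 2 ∧ q ∣ x ∧ q ∣ y + p := by
    intro x y
    constructor
    · rintro ⟨z, ⟨h1, h2, h3⟩, h⟩
      simp [Zsqrtd.ext_iff] at h
      rw [gauss_norm] at h1
      rw [← h.1, ← h.2]
      exact ⟨by linarith, by simpa using h2, h3⟩
    · rintro ⟨h1, h2, h3⟩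
      refine ⟨⟨y, -x⟩, ⟨?_, ?_, h3⟩, ?_⟩
      · rw [gauss_norm]; linarith
      · simpa using h2
      · simp [Zsqrtd.ext_iff]
  have hI2 : (⟨0, 1⟩ : GaussianInt) ^ 2 = ⟨-1, 0⟩ := by decide
  have hI3 : (⟨0, 1⟩ : GaussianInt) ^ 3 = ⟨0, -1⟩ := by decide
  have m2 : ∀ x y : ℤ, (⟨x, y⟩ : GaussianInt) ∈ T' 2 ↔
      x ^ 2 + y ^ 2 = p ^ 2 ∧ q ∣ y ∧ q ∣ x - p := by
    intro x y
    constructor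
    · rintro ⟨z, ⟨h1, h2, h3⟩, h⟩
      simp only [hI2] at h
      simp [Zsqrtd.ext_iff] at h
      rw [gauss_norm] at h1
      rw [← h.1, ← h.2]
      refine ⟨by linarith, by simpa using h2, ?_⟩
      rw [show -z.re - p = -(z.re + p) by ring]; exact h3.neg_right
    · rintro ⟨h1, h2, h3⟩
      refine ⟨⟨-x, -y⟩, ⟨?_, ?_, ?_⟩, ?_⟩
      · rw [gauss_norm]; linarith
      · simpa using h2
      · show q ∣ -x + p
        rw [show -x + p = -(x - p) by ring]; exact h3.neg_right
      · simp only [hI2]; simp [Zsqrtd.ext_iff]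
  have m3 : ∀ x y : ℤ, (⟨x, y⟩ : GaussianInt) ∈ T' 3 ↔
      x ^ 2 + y ^ 2 = p ^ 2 ∧ q ∣ x ∧ q ∣ y - p := by
    intro x y
    constructor
    · rintro ⟨z, ⟨h1, h2, h3⟩, h⟩
      simp only [hI3] at h
      simp [Zsqrtd.ext_iff] at h
      rw [gauss_norm] at h1
      rw [← h.1, ← h.2]
      refine ⟨by linarith, by simpa using h2, ?_⟩
      rw [show -z.re - p = -(z.re + p) by ring]; exact h3.neg_right
    · rintro ⟨h1, h2, h3⟩
      refine ⟨⟨-y, x⟩, ⟨?_, ?_, ?_⟩, ?_⟩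
      · rw [gauss_norm]; linarith
      · simpa using h2
      · show q ∣ -y + p
        rw [show -y + p = -(y - p) by ring]; exact h3.neg_right
      · simp only [hI3]; simp [Zsqrtd.ext_iff]
  have hcop' : ∀ d : ℤ, d ∣ p → d ∣ q → IsUnit d := fun d h1 h2 => hcop.isUnit_of_dvd' h1 h2
  have hsub : ∀ e, e ≤ 3 → T' e ⊆ {z : GaussianInt | z.norm = p ^ 2} := by
    rintro e he ⟨x, y⟩ h
    show (⟨x, y⟩ : GaussianInt).norm = p ^ 2
    rw [gauss_norm]
    interval_cases e
    · exact ((m0 x y).1 h).1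
    · exact ((m1 x y).1 h).1
    · exact ((m2 x y).1 h).1
    · exact ((m3 x y).1 h).1
  -- for q ≥ 3 the four sets partition the norm set
  have key : 3 ≤ q → (∀ x y : ℤ, x ^ 2 + y ^ 2 = p ^ 2 → q ∣ x ∨ q ∣ y) →
      (∀ x : ℤ, q ∣ x ^ 2 - p ^ 2 → q ∣ x - p ∨ q ∣ x + p) → ¬ q ∣ 2 * p → T.ncard = R := by
    intro hq3 hA hB hC
    have hun : {z : GaussianInt | z.norm = p ^ 2} = T' 0 ∪ T' 2 ∪ (T' 1 ∪ T' 3) := by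
      apply Set.Subset.antisymm
      · rintro ⟨x, y⟩ h
        have h : x ^ 2 + y ^ 2 = p ^ 2 := by
          have h : (⟨x, y⟩ : GaussianInt).norm = p ^ 2 := h
          rwa [gauss_norm] at h
        simp only [Set.mem_union, m0, m1, m2, m3]
        rcases hA x y h with ⟨k, hk⟩ | ⟨k, hk⟩
        · rcases hB y ⟨-k * x, by rw [← h]; rw [hk]; ring⟩ with h' | h'
          · exact Or.inr (Or.inr ⟨h, ⟨k, hk⟩, h'⟩)
          · exact Or.inr (Or.inl ⟨h, ⟨k, hk⟩, h'⟩)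
        · rcases hB x ⟨-k * y, by rw [← h]; rw [hk]; ring⟩ with h' | h'
          · exact Or.inl (Or.inr ⟨h, ⟨k, hk⟩, h'⟩)
          · exact Or.inl (Or.inl ⟨h, ⟨k, hk⟩, h'⟩)
      · exact Set.union_subset (Set.union_subset (hsub 0 (by norm_num)) (hsub 2 (by norm_num)))
          (Set.union_subset (hsub 1 (by norm_num)) (hsub 3 (by norm_num)))
    have hqp : ¬ q ∣ p := fun h => hC (h.mul_left 2)
    have d02 : Disjoint (T' 0) (T' 2) := by
      rw [Set.disjoint_left]
      rintro ⟨x, y⟩ h0 h2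
      have := dvd_sub ((m0 x y).1 h0).2.2 ((m2 x y).1 h2).2.2
      exact hC (by rwa [show x + p - (x - p) = 2 * p by ring] at this)
    have d13 : Disjoint (T' 1) (T' 3) := by
      rw [Set.disjoint_left]
      rintro ⟨x, y⟩ h0 h2
      have := dvd_sub ((m1 x y).1 h0).2.2 ((m3 x y).1 h2).2.2
      exact hC (by rwa [show y + p - (y - p) = 2 * p by ring] at this)
    have dd : Disjoint (T' 0 ∪ T' 2) (T' 1 ∪ T' 3) := by
      rw [Set.disjoint_left]
      rintro ⟨x, y⟩ h0 h2
      have hy : q ∣ y := by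
        rcases h0 with h | h
        · exact ((m0 x y).1 h).2.1
        · exact ((m2 x y).1 h).2.1
      rcases h2 with h | h
      · exact hqp ((dvd_add_right hy).1 ((m1 x y).1 h).2.2)
      · exact hqp ((dvd_sub_right hy).1 ((m3 x y).1 h).2.2)
    have : 4 * T.ncard = 4 * R := by
      rw [← hR, hun, Set.ncard_union_eq dd ((hT'fin 0).union (hT'fin 2))
        ((hT'fin 1).union (hT'fin 3)), Set.ncard_union_eq d02 (hT'fin 0) (hT'fin 2),
        Set.ncard_union_eq d13 (hT'fin 1) (hT'fin 3)]
      simp only [hT'card]; ring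
    omega
  have hmod : ∀ d : ℤ, d ∣ q → 2 ≤ d → p % d ≠ 0 := by
    intro d hd h2 h0
    have := hcop' d (Int.dvd_of_emod_eq_zero h0) hd
    rw [Int.isUnit_iff] at this
    omega
  interval_cases q
  · have : T = {z : GaussianInt | z.norm = p ^ 2} := by
      ext z; simp [hT]
    rw [this, hR]; simp
  · have hp2 := hmod 2 (by norm_num) (by norm_num)
    have hpar : ∀ x y : ℤ, x ^ 2 + y ^ 2 = p ^ 2 → (x + y) % 2 = 1 := by
      intro x y h
      have hz : ∀ x y p : ZMod 2, p ≠ 0 → x ^ 2 + y ^ 2 = p ^ 2 → x + y ≠ 0 := by decide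
      have h1 := hz x y p (by rw [Ne, ZMod.intCast_zmod_eq_zero_iff_dvd]; omega)
        (by exact_mod_cast congrArg (Int.cast : ℤ → ZMod 2) h)
      rw [← Int.cast_add, Ne, ZMod.intCast_zmod_eq_zero_iff_dvd] at h1
      omega
    have hun : {z : GaussianInt | z.norm = p ^ 2} = T' 0 ∪ T' 1 := by
      apply Set.Subset.antisymm
      · rintro ⟨x, y⟩ h
        have h : x ^ 2 + y ^ 2 = p ^ 2 := by
          have h : (⟨x, y⟩ : GaussianInt).norm = p ^ 2 := h
          rwa [gauss_norm] at h
        simp only [Set.mem_union, m0, m1]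
        have := hpar x y h
        rcases Int.emod_two_eq_zero_or_one x with hx | hx
        · exact Or.inr ⟨h, by omega, by omega⟩
        · exact Or.inl ⟨h, by omega, by omega⟩
      · exact Set.union_subset (hsub 0 (by norm_num)) (hsub 1 (by norm_num))
    have dd : Disjoint (T' 0) (T' 1) := by
      rw [Set.disjoint_left]
      rintro ⟨x, y⟩ h0 h2
      have h0 := (m0 x y).1 h0
      have h2 := (m1 x y).1 h2
      have := hpar x y h0.1
      omega
    have : 2 * T.ncard = 4 * R := by
      rw [← hR, hun, Set.ncard_union_eq dd (hT'fin 0) (hT'fin 1)]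
      simp only [hT'card]; ring
    simp; omega
  · have hp3 := hmod 3 (by norm_num) (by norm_num)
    have := key (by norm_num) ?_ ?_ (by omega)
    · simpa using this
    · intro x y h
      have hz : ∀ x y p : ZMod 3, p ≠ 0 → x ^ 2 + y ^ 2 = p ^ 2 → x = 0 ∨ y = 0 := by decide
      have h1 := hz x y p (by rw [Ne, ZMod.intCast_zmod_eq_zero_iff_dvd]; omega)
        (by exact_mod_cast congrArg (Int.cast : ℤ → ZMod 3) h)
      rw [ZMod.intCast_zmod_eq_zero_iff_dvd, ZMod.intCast_zmod_eq_zero_iff_dvd] at h1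
      exact h1
    · intro x h
      rw [show x ^ 2 - p ^ 2 = (x - p) * (x + p) by ring] at h
      exact Int.prime_three.dvd_or_dvd h
  · have hp2 := hmod 2 (by norm_num) (by norm_num)
    have hp4 : p % 4 = 1 ∨ p % 4 = 3 := by omega
    have := key (by norm_num) ?_ ?_ (by omega)
    · simpa using this
    · intro x y h
      -- squares have to be compared modulo 8 to see that the even one is divisible by 4
      have hz : ∀ x y p : ZMod 8, 4 * p ≠ 0 → x ^ 2 + y ^ 2 = p ^ 2 → 2 * x = 0 ∨ 2 * y = 0 := by
        decide
      have h1 := hz x y p (by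
          rw [Ne, show (4 : ZMod 8) * p = ((4 * p : ℤ) : ZMod 8) by push_cast; rfl,
            ZMod.intCast_zmod_eq_zero_iff_dvd]; omega)
        (by exact_mod_cast congrArg (Int.cast : ℤ → ZMod 8) h)
      rw [show (2 : ZMod 8) * x = ((2 * x : ℤ) : ZMod 8) by push_cast; rfl,
        show (2 : ZMod 8) * y = ((2 * y : ℤ) : ZMod 8) by push_cast; rfl,
        ZMod.intCast_zmod_eq_zero_iff_dvd, ZMod.intCast_zmod_eq_zero_iff_dvd] at h1
      omega
    · intro x h
      have hz : ∀ x p : ZMod 4, 2 * p ≠ 0 → x ^ 2 - p ^ 2 = 0 → x - p = 0 ∨ x + p = 0 := by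
        decide
      have h1 := hz x p (by
          rw [Ne, show (2 : ZMod 4) * p = ((2 * p : ℤ) : ZMod 4) by push_cast; rfl,
            ZMod.intCast_zmod_eq_zero_iff_dvd]; omega)
        (by rw [show (x : ZMod 4) ^ 2 - (p : ZMod 4) ^ 2 = ((x ^ 2 - p ^ 2 : ℤ) : ZMod 4) by
              push_cast; rfl, ZMod.intCast_zmod_eq_zero_iff_dvd]; exact h)
      rw [← Int.cast_sub, ← Int.cast_add, ZMod.intCast_zmod_eq_zero_iff_dvd,
        ZMod.intCast_zmod_eq_zero_iff_dvd] at h1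
      exact h1
  · have hp5 := hmod 5 (by norm_num) (by norm_num)
    have := key (by norm_num) ?_ ?_ (by omega)
    · simpa using this
    · intro x y h
      have hz : ∀ x y p : ZMod 5, p ≠ 0 → x ^ 2 + y ^ 2 = p ^ 2 → x = 0 ∨ y = 0 := by decide
      have h1 := hz x y p (by rw [Ne, ZMod.intCast_zmod_eq_zero_iff_dvd]; omega)
        (by exact_mod_cast congrArg (Int.cast : ℤ → ZMod 5) h)
      rw [ZMod.intCast_zmod_eq_zero_iff_dvd, ZMod.intCast_zmod_eq_zero_iff_dvd] at h1
      exact h1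
    · intro x h
      rw [show x ^ 2 - p ^ 2 = (x - p) * (x + p) by ring] at h
      have h5 : Prime (5 : ℤ) := by exact_mod_cast Nat.prime_iff_prime_int.1 Nat.prime_five
      exact h5.dvd_or_dvd h

/-- After clearing denominators the equation is a quadratic equation for `π` with integer
coefficients. For `j = 0` it makes `π` rational, and otherwise `pi_not_quadratic` applies. -/
theorem no_resonance (p q n j : ℤ) (hp : p ≠ 0) (hq : q ≠ 0) (hn : n ≠ 0) (b : ℝ)
    (hb : b = 8 * Real.pi * (p : ℝ) / (q : ℝ))
    (h : b ^ 2 / 16 - (2 * Real.pi * n) ^ 2 / b ^ 2 = 2 * (2 * Real.pi * n) * j) : False := by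
  have hpR : (p : ℝ) ≠ 0 := by exact_mod_cast hp
  have hqR : (q : ℝ) ≠ 0 := by exact_mod_cast hq
  have hpi := Real.pi_ne_zero
  have key : 64 * (p : ℝ) ^ 4 * Real.pi ^ 2 =
      (64 * p ^ 2 * q ^ 2 * n * j) * Real.pi + n ^ 2 * q ^ 4 := by
    rw [hb] at h
    field_simp at h
    linear_combination h / 64
  rcases eq_or_ne j 0 with rfl | hj
  · have h1 : (8 * (p : ℝ) ^ 2 * Real.pi) ^ 2 = (n * q ^ 2) ^ 2 := by
      push_cast at key; linear_combination key
    have h8 : (8 * (p : ℝ) ^ 2) ≠ 0 := by positivity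
    rcases sq_eq_sq_iff_eq_or_eq_neg.1 h1 with h2 | h2
    · refine irrational_pi ⟨(n * q ^ 2 : ℚ) / (8 * p ^ 2), ?_⟩
      push_cast
      rw [div_eq_iff h8]; linarith
    · refine irrational_pi ⟨-(n * q ^ 2 : ℚ) / (8 * p ^ 2), ?_⟩
      push_cast
      rw [div_eq_iff h8]; linarith
  · refine pi_not_quadratic (64 * p ^ 4) (64 * p ^ 2 * q ^ 2 * n * j) (n ^ 2 * q ^ 4)
      (by positivity) (by positivity) (by positivity) ?_
    push_cast; exact key

/-! ### Fourier coefficients of smooth periodic functions -/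

open scoped ContDiff

/-- Differentiation under the integral sign, dominated on a compact neighbourhood. -/
theorem hasFDerivAt_param {E F : Type} [NormedAddCommGroup E] [NormedSpace ℝ E]
    [FiniteDimensional ℝ E] [NormedAddCommGroup F] [NormedSpace ℝ F]
    (f : E × ℝ → F) (hf : ContDiff ℝ 1 f) (e : E) :
    HasFDerivAt (fun e => ∫ s in (0 : ℝ)..1, f (e, s))
      (∫ s in (0 : ℝ)..1, (fderiv ℝ f (e, s)).comp (ContinuousLinearMap.inl ℝ E ℝ)) e := by
  have hcont : Continuous (fun p : E × ℝ => (fderiv ℝ f p).comp (ContinuousLinearMap.inl ℝ E ℝ)) :=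
    (hf.continuous_fderiv one_ne_zero).clm_comp continuous_const
  have : ProperSpace E := FiniteDimensional.proper ℝ E
  obtain ⟨C, hC⟩ := ((isCompact_closedBall e 1).prod (isCompact_Icc (a := (0 : ℝ)) (b := 1))).exists_bound_of_continuousOn
    hcont.continuousOn
  have hfc := hf.continuous
  refine intervalIntegral.hasFDerivAt_integral_of_dominated_of_fderiv_le
    (F := fun e s => f (e, s))
    (F' := fun e s => (fderiv ℝ f (e, s)).comp (ContinuousLinearMap.inl ℝ E ℝ))
    (bound := fun _ => C) (Metric.closedBall_mem_nhds e one_pos) ?_ ?_ ?_ ?_ ?_ ?_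
  · exact Filter.Eventually.of_forall fun x =>
      (hfc.comp (Continuous.prodMk_right x)).aestronglyMeasurable
  · exact (hfc.comp (Continuous.prodMk_right e)).intervalIntegrable _ _
  · exact (hcont.comp (Continuous.prodMk_right e)).aestronglyMeasurable
  · refine Filter.Eventually.of_forall fun s hs x hx => hC (x, s) ⟨hx, ?_⟩
    rw [Set.uIoc_of_le zero_le_one] at hs
    exact ⟨hs.1.le, hs.2⟩
  · exact intervalIntegrable_const
  · refine Filter.Eventually.of_forall fun s _ x _ => ?_
    have h1 : HasFDerivAt f (fderiv ℝ f (x, s)) (x, s) :=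
      (hf.differentiable one_ne_zero _).hasFDerivAt
    exact h1.comp x (hasFDerivAt_prodMk_left x s)

theorem contDiff_param_nat {E : Type} [NormedAddCommGroup E] [NormedSpace ℝ E]
    [FiniteDimensional ℝ E] (n : ℕ) : ∀ {F : Type} [NormedAddCommGroup F] [NormedSpace ℝ F]
    (f : E × ℝ → F) (_ : ContDiff ℝ n f),
    ContDiff ℝ n (fun e => ∫ s in (0 : ℝ)..1, f (e, s)) := by
  induction n with
  | zero =>
    intro F _ _ f hf
    rw [Nat.cast_zero, contDiff_zero] at hf ⊢
    have h' : Continuous (Function.uncurry fun e s => f (e, s)) := hf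
    exact intervalIntegral.continuous_parametric_intervalIntegral_of_continuous' h' 0 1
  | succ n ih =>
    intro F _ _ f hf
    push_cast at hf ⊢
    rw [contDiff_succ_iff_hasFDerivAt]
    refine ⟨_, ?_, fun e => hasFDerivAt_param f (hf.of_le (by simp)) e⟩
    refine ih (F := E →L[ℝ] F)
      (fun p => (fderiv ℝ f p).comp (ContinuousLinearMap.inl ℝ E ℝ)) ?_
    exact (hf.fderiv_right le_rfl).clm_comp contDiff_const

theorem contDiff_param {E : Type} [NormedAddCommGroup E] [NormedSpace ℝ E]
    [FiniteDimensional ℝ E] (f : E × ℝ → ℂ) (hf : ContDiff ℝ ∞ f) :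
    ContDiff ℝ ∞ (fun e => ∫ s in (0 : ℝ)..1, f (e, s)) :=
  contDiff_infty.2 fun n => contDiff_param_nat n f (contDiff_infty.1 hf n)

theorem hasDerivAt_param (f : ℝ × ℝ → ℂ) (hf : ContDiff ℝ ∞ f) (x : ℝ) :
    HasDerivAt (fun x => ∫ s in (0 : ℝ)..1, f (x, s))
      (∫ s in (0 : ℝ)..1, deriv (fun u => f (u, s)) x) x := by
  have hf1 : ContDiff ℝ 1 f := hf.of_le (by exact_mod_cast le_top)
  have h := (hasFDerivAt_param f hf1 x).hasDerivAt
  have hcont : Continuous (fun s : ℝ =>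
      (fderiv ℝ f (x, s)).comp (ContinuousLinearMap.inl ℝ ℝ ℝ)) :=
    ((hf1.continuous_fderiv one_ne_zero).comp (Continuous.prodMk_right x)).clm_comp
      continuous_const
  have hI : IntervalIntegrable (fun s : ℝ =>
      (fderiv ℝ f (x, s)).comp (ContinuousLinearMap.inl ℝ ℝ ℝ)) volume 0 1 :=
    hcont.intervalIntegrable _ _
  have e : (∫ s in (0 : ℝ)..1, deriv (fun u => f (u, s)) x) =
      (∫ s in (0 : ℝ)..1, (fderiv ℝ f (x, s)).comp (ContinuousLinearMap.inl ℝ ℝ ℝ)) 1 := by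
    rw [ContinuousLinearMap.intervalIntegral_apply hI]
    congr 1
    ext s
    have h1 : HasFDerivAt f (fderiv ℝ f (x, s)) (x, s) :=
      (hf1.differentiable one_ne_zero _).hasFDerivAt
    exact (h1.comp x (hasFDerivAt_prodMk_left x s)).hasDerivAt.deriv
  rw [e]
  exact h

/-- The character `s ↦ exp(2πi n s)` of `ℝ/ℤ`, as a function on `ℝ`. -/
noncomputable def chr (n : ℤ) (s : ℝ) : ℂ := exp (2 * Real.pi * n * s * I)

theorem chr_add (n : ℤ) (s t : ℝ) : chr n (s + t) = chr n s * chr n t := by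
  simp only [chr, ← exp_add]; congr 1; push_cast; ring

theorem chr_one (n : ℤ) : chr n 1 = 1 := by
  simp only [chr]
  rw [show (2 * Real.pi * n * (1 : ℝ) * I : ℂ) = n * (2 * Real.pi * I) by push_cast; ring]
  exact exp_int_mul_two_pi_mul_I n

theorem chr_zero_left (s : ℝ) : chr 0 s = 1 := by simp [chr]

theorem chr_periodic (n : ℤ) (s : ℝ) : chr n (s + 1) = chr n s := by
  rw [chr_add, chr_one, mul_one]

theorem chr_neg (n : ℤ) (s : ℝ) : chr (-n) s * chr n s = 1 := by
  simp only [chr, ← exp_add]; rw [← exp_zero]; congr 1; push_cast; ring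

theorem chr_contDiff (n : ℤ) : ContDiff ℝ ∞ (chr n) := by
  unfold chr
  have : ContDiff ℝ ∞ (fun s : ℝ => (s : ℂ)) := ofRealCLM.contDiff
  fun_prop

theorem chr_hasDerivAt (n : ℤ) (s : ℝ) :
    HasDerivAt (chr n) (2 * Real.pi * n * I * chr n s) s := by
  have h : HasDerivAt (fun s : ℝ => (s : ℂ)) 1 s := ofRealCLM.hasDerivAt
  have := ((h.const_mul (2 * Real.pi * n : ℂ)).mul_const I).cexp
  unfold chr
  convert this using 1; ring

/-- The `n`-th Fourier coefficient of a `1`-periodic function on `ℝ`. -/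
noncomputable def coef (n : ℤ) (h : ℝ → ℂ) : ℂ := ∫ s in (0 : ℝ)..1, chr (-n) s * h s

theorem coef_add (n : ℤ) (h k : ℝ → ℂ) (hh : Continuous h) (hk : Continuous k) :
    coef n (fun s => h s + k s) = coef n h + coef n k := by
  have := (chr_contDiff (-n)).continuous
  unfold coef
  rw [← intervalIntegral.integral_add]
  · congr 1; ext s; ring
  · exact Continuous.intervalIntegrable (by fun_prop) _ _
  · exact Continuous.intervalIntegrable (by fun_prop) _ _

theorem coef_const_mul (n : ℤ) (c : ℂ) (h : ℝ → ℂ) :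
    coef n (fun s => c * h s) = c * coef n h := by
  unfold coef
  rw [← intervalIntegral.integral_const_mul]
  congr 1; ext s; ring

/-- Integration by parts; the boundary terms cancel by periodicity. -/
theorem coef_deriv (n : ℤ) (h : ℝ → ℂ) (hh : ContDiff ℝ ∞ h) (hp : ∀ s, h (s + 1) = h s) :
    coef n (deriv h) = 2 * Real.pi * n * I * coef n h := by
  have hd : ∀ s, HasDerivAt h (deriv h s) s := fun s =>
    (hh.differentiable (by simp) s).hasDerivAt
  have hdc : Continuous (deriv h) := hh.continuous_deriv (by simp)
  have hc := (chr_contDiff (-n)).continuous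
  have h1 : ∫ s in (0 : ℝ)..1, ((2 * Real.pi * (-n : ℤ) * I * chr (-n) s) * h s +
      chr (-n) s * deriv h s) = chr (-n) 1 * h 1 - chr (-n) 0 * h 0 := by
    refine intervalIntegral.integral_eq_sub_of_hasDerivAt
      (fun s _ => (chr_hasDerivAt (-n) s).mul (hd s)) ?_
    have := hh.continuous
    exact Continuous.intervalIntegrable (by fun_prop) _ _
  have e1 : chr (-n) 1 * h 1 = chr (-n) 0 * h 0 := by
    have := chr_periodic (-n) 0
    have := hp 0
    simp only [zero_add] at *
    simp [*]
  rw [e1, sub_self, intervalIntegral.integral_add] at h1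
  · have h2 : ∫ s in (0 : ℝ)..1, (2 * Real.pi * (-n : ℤ) * I * chr (-n) s) * h s =
      2 * Real.pi * (-n : ℤ) * I * coef n h := by
      unfold coef
      rw [← intervalIntegral.integral_const_mul]; congr 1; ext s; ring
    rw [h2] at h1
    unfold coef at h1 ⊢
    push_cast at h1
    linear_combination h1
  · have := hh.continuous
    exact Continuous.intervalIntegrable (by fun_prop) _ _
  · exact Continuous.intervalIntegrable (by fun_prop) _ _

/-- A continuous periodic function whose Fourier coefficients vanish outside a finite set is the
corresponding trigonometric polynomial. -/
theorem eq_sum_coef (h : ℝ → ℂ) (hh : Continuous h) (hp : ∀ s, h (s + 1) = h s)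
    (S : Finset ℤ) (hS : ∀ n ∉ S, coef n h = 0) (s : ℝ) :
    h s = ∑ n ∈ S, coef n h * chr n s := by
  have : Fact ((0 : ℝ) < 1) := ⟨one_pos⟩
  have hper : Function.Periodic h 1 := hp
  let H : C(AddCircle (1 : ℝ), ℂ) := ⟨hper.lift, by
    exact continuous_coinduced_dom.2 hh⟩
  have hH : ∀ s : ℝ, H (s : AddCircle (1 : ℝ)) = h s := fun s => hper.lift_coe s
  have hfour : ∀ (n : ℤ) (s : ℝ), (fourier n (s : AddCircle (1 : ℝ)) : ℂ) = chr n s := by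
    intro n s
    rw [fourier_coe_apply, chr]; congr 1; push_cast; ring
  have hcoef : ∀ n, fourierCoeff H n = coef n h := by
    intro n
    rw [fourierCoeff_eq_intervalIntegral H n 0]
    simp only [hfour, hH, smul_eq_mul, coef]
    simp
  have hsupp : ∀ n ∉ S, fourierCoeff H n • (fourier n (s : AddCircle (1 : ℝ)) : ℂ) = 0 := by
    intro n hn; rw [hcoef, hS n hn, zero_smul]
  have hsum : Summable (fourierCoeff H) :=
    summable_of_ne_finset_zero (s := S) fun n hn => by rw [hcoef, hS n hn]
  have h1 := has_pointwise_sum_fourier_series_of_summable hsum (s : AddCircle (1 : ℝ))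
  have h2 : HasSum (fun n => fourierCoeff H n • (fourier n (s : AddCircle (1 : ℝ)) : ℂ))
      (∑ n ∈ S, fourierCoeff H n • (fourier n (s : AddCircle (1 : ℝ)) : ℂ)) :=
    hasSum_sum_of_ne_finset_zero hsupp
  have := h1.unique h2
  rw [hH] at this
  rw [this]
  refine Finset.sum_congr rfl fun n _ => ?_
  rw [hcoef, hfour, smul_eq_mul]

/-! ### Ladder operators on quasi-periodic functions -/

/-- The ladder argument: if `B` is the adjoint of `A` for a positive definite form and
`AB = BA - M` with `M > 0`, then `B` lowers eigenvalues of `BA ≥ 0` by `M`, which forces every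
eigenvalue of `BA` to be a multiple of `M`. -/
theorem ladder {V : Type*} [AddCommGroup V] [Module ℂ V] (A B : V →ₗ[ℂ] V) (ip : V → V → ℂ)
    (hsmul : ∀ (c : ℂ) u v, ip (c • u) v = c * ip u v)
    (hBA : ∀ u v, ip (B u) v = ip u (A v))
    (hpos : ∀ u, ∃ r : ℝ, 0 ≤ r ∧ ip u u = r) (hdef : ∀ u, ip u u = 0 → u = 0)
    (M : ℝ) (hcomm : ∀ u, A (B u) = B (A u) - (M : ℂ) • u) (k : ℕ) :
    ∀ (l : ℂ) (u : V), u ≠ 0 → B (A u) = l • u → l.re < M * k → ∃ j : ℕ, l = M * j := by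
  induction k with
  | zero =>
    intro l u hu hl hlt
    exfalso
    have h1 : l * ip u u = ip (A u) (A u) := by rw [← hsmul, ← hl, hBA]
    obtain ⟨r, hr, hr'⟩ := hpos u
    obtain ⟨r1, hr1, hr1'⟩ := hpos (A u)
    have hr0 : r ≠ 0 := fun h => hu (hdef u (by rw [hr', h]; simp))
    rw [hr', hr1'] at h1
    have h2 := congrArg Complex.re h1
    simp at h2 hlt
    have : 0 < r := lt_of_le_of_ne hr (Ne.symm hr0)
    nlinarith
  | succ k ih =>
    intro l u hu hl hlt
    have hAB : A (B u) = (l - M) • u := by rw [hcomm, hl, sub_smul]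
    by_cases hB : B u = 0
    · rw [hB, map_zero] at hAB
      have := (smul_eq_zero.1 hAB.symm).resolve_right hu
      exact ⟨1, by simpa using sub_eq_zero.1 this⟩
    · obtain ⟨j, hj⟩ := ih (l - M) (B u) hB (by rw [hAB, map_smul]) (by
        push_cast at hlt
        simp only [sub_re, ofReal_re]
        linarith)
      exact ⟨j + 1, by push_cast; linear_combination hj⟩

/-- Partial derivative in the first variable. -/
noncomputable def dX (u : ℝ × ℝ → ℂ) (p : ℝ × ℝ) : ℂ := fderiv ℝ u p (1, 0)

/-- Partial derivative in the second variable. -/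
noncomputable def dY (u : ℝ × ℝ → ℂ) (p : ℝ × ℝ) : ℂ := fderiv ℝ u p (0, 1)

theorem dX_contDiff {u : ℝ × ℝ → ℂ} (hu : ContDiff ℝ ∞ u) : ContDiff ℝ ∞ (dX u) :=
  (hu.fderiv_right (by simp)).clm_apply contDiff_const

theorem dY_contDiff {u : ℝ × ℝ → ℂ} (hu : ContDiff ℝ ∞ u) : ContDiff ℝ ∞ (dY u) :=
  (hu.fderiv_right (by simp)).clm_apply contDiff_const

theorem hasDerivAt_dX {u : ℝ × ℝ → ℂ} (hu : ContDiff ℝ ∞ u) (x y : ℝ) :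
    HasDerivAt (fun s => u (s, y)) (dX u (x, y)) x := by
  have h := (hu.differentiable (by simp) (x, y)).hasFDerivAt
  have h2 : HasFDerivAt (fun s => u (s, y)) _ x := h.comp x (hasFDerivAt_prodMk_left x y)
  exact h2.hasDerivAt

theorem hasDerivAt_dY {u : ℝ × ℝ → ℂ} (hu : ContDiff ℝ ∞ u) (x y : ℝ) :
    HasDerivAt (fun s => u (x, s)) (dY u (x, y)) y := by
  have h := (hu.differentiable (by simp) (x, y)).hasFDerivAt
  have h2 : HasFDerivAt (fun s => u (x, s)) _ y := h.comp y (hasFDerivAt_prodMk_right x y)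
  exact h2.hasDerivAt

theorem dX_dY {u : ℝ × ℝ → ℂ} (hu : ContDiff ℝ ∞ u) (p : ℝ × ℝ) :
    dX (dY u) p = dY (dX u) p := by
  have hs : IsSymmSndFDerivAt ℝ u p :=
    (contDiff_infty.1 hu 2).contDiffAt.isSymmSndFDerivAt (by simp)
  have hd : DifferentiableAt ℝ (fderiv ℝ u) p :=
    ((hu.fderiv_right (m := ∞) (by simp)).differentiable (by simp)) p
  have key : ∀ v w : ℝ × ℝ, fderiv ℝ (fun p => fderiv ℝ u p v) p w =
      fderiv ℝ (fderiv ℝ u) p w v := by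
    intro v w
    rw [fderiv_clm_apply hd (differentiableAt_const v)]
    simp
  unfold dX dY
  rw [key, key]
  exact hs.eq _ _

/-- Smooth functions on `ℝ²` that are `1`-periodic in `y` and acquire the factor
`exp(-2πi n y)` under `x ↦ x + 1`: sections of a line bundle of degree `±n` on the torus. -/
def QP (n : ℤ) : Submodule ℂ (ℝ × ℝ → ℂ) where
  carrier := {u | ContDiff ℝ ∞ u ∧ (∀ x y, u (x, y + 1) = u (x, y)) ∧
    ∀ x y, u (x + 1, y) = chr (-n) y * u (x, y)}
  zero_mem' := ⟨contDiff_const, by simp, by simp⟩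
  add_mem' := by
    rintro u v ⟨hu, hu1, hu2⟩ ⟨hv, hv1, hv2⟩
    exact ⟨hu.add hv, fun x y => by simp [hu1, hv1], fun x y => by simp [hu2, hv2, mul_add]⟩
  smul_mem' := by
    rintro c u ⟨hu, hu1, hu2⟩
    exact ⟨contDiff_const.smul hu, fun x y => by simp [hu1], fun x y => by
      simp only [Pi.smul_apply, hu2, smul_eq_mul]; ring⟩

/-- The first-order operator `ε ∂ₓ + i ∂_y - 2πn (x - s) - ε i b / 4`. For `ε = 1` and `ε = -1` these
are the two ladder operators. -/
noncomputable def ladFun (n : ℤ) (s b ε : ℝ) (u : ℝ × ℝ → ℂ) (p : ℝ × ℝ) : ℂ :=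
  ε * dX u p + I * dY u p + (-(2 * Real.pi * n) * (p.1 - s) - ε * I * b / 4) * u p

theorem dX_add {u v : ℝ × ℝ → ℂ} (hu : ContDiff ℝ ∞ u) (hv : ContDiff ℝ ∞ v) (p : ℝ × ℝ) :
    dX (fun p => u p + v p) p = dX u p + dX v p := by
  unfold dX
  rw [fderiv_fun_add (hu.differentiable (by simp) p) (hv.differentiable (by simp) p)]
  rfl

theorem dY_add {u v : ℝ × ℝ → ℂ} (hu : ContDiff ℝ ∞ u) (hv : ContDiff ℝ ∞ v) (p : ℝ × ℝ) :
    dY (fun p => u p + v p) p = dY u p + dY v p := by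
  unfold dY
  rw [fderiv_fun_add (hu.differentiable (by simp) p) (hv.differentiable (by simp) p)]
  rfl

theorem dX_mul {u v : ℝ × ℝ → ℂ} (hu : ContDiff ℝ ∞ u) (hv : ContDiff ℝ ∞ v) (p : ℝ × ℝ) :
    dX (fun p => u p * v p) p = dX u p * v p + u p * dX v p := by
  unfold dX
  rw [fderiv_fun_mul (hu.differentiable (by simp) p) (hv.differentiable (by simp) p)]
  simp; ring

theorem dY_mul {u v : ℝ × ℝ → ℂ} (hu : ContDiff ℝ ∞ u) (hv : ContDiff ℝ ∞ v) (p : ℝ × ℝ) :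
    dY (fun p => u p * v p) p = dY u p * v p + u p * dY v p := by
  unfold dY
  rw [fderiv_fun_mul (hu.differentiable (by simp) p) (hv.differentiable (by simp) p)]
  simp; ring

theorem dX_const (c : ℂ) (p : ℝ × ℝ) : dX (fun _ => c) p = 0 := by
  unfold dX; simp

theorem dY_const (c : ℂ) (p : ℝ × ℝ) : dY (fun _ => c) p = 0 := by
  unfold dY; simp

theorem dX_conj {v : ℝ × ℝ → ℂ} (hv : ContDiff ℝ ∞ v) (p : ℝ × ℝ) :
    dX (fun p => (starRingEnd ℂ) (v p)) p = (starRingEnd ℂ) (dX v p) := by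
  unfold dX
  have h := (hv.differentiable (by simp) p).hasFDerivAt
  have := (conjCLE.toContinuousLinearMap.hasFDerivAt (x := v p)).comp p h
  have h2 : HasFDerivAt (fun p => (starRingEnd ℂ) (v p)) _ p := this
  rw [h2.fderiv]; simp

theorem dY_conj {v : ℝ × ℝ → ℂ} (hv : ContDiff ℝ ∞ v) (p : ℝ × ℝ) :
    dY (fun p => (starRingEnd ℂ) (v p)) p = (starRingEnd ℂ) (dY v p) := by
  unfold dY
  have h := (hv.differentiable (by simp) p).hasFDerivAt
  have := (conjCLE.toContinuousLinearMap.hasFDerivAt (x := v p)).comp p h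
  have h2 : HasFDerivAt (fun p => (starRingEnd ℂ) (v p)) _ p := this
  rw [h2.fderiv]; simp

/-- The zeroth-order coefficient of the operator `ladFun`. -/
noncomputable def ladW (n : ℤ) (s b ε : ℝ) (p : ℝ × ℝ) : ℂ :=
  -(2 * Real.pi * n) * (p.1 - s) - ε * I * b / 4

theorem ofReal_fst_contDiff : ContDiff ℝ ∞ (fun p : ℝ × ℝ => (p.1 : ℂ)) :=
  ofRealCLM.contDiff.comp contDiff_fst

theorem ladW_contDiff (n : ℤ) (s b ε : ℝ) : ContDiff ℝ ∞ (ladW n s b ε) := by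
  unfold ladW
  have := ofReal_fst_contDiff
  fun_prop

theorem dX_ladW (n : ℤ) (s b ε : ℝ) (p : ℝ × ℝ) :
    dX (ladW n s b ε) p = -(2 * Real.pi * n) := by
  have h := hasDerivAt_dX (ladW_contDiff n s b ε) p.1 p.2
  have h1 : HasDerivAt (fun s : ℝ => (s : ℂ)) 1 p.1 := ofRealCLM.hasDerivAt
  have h2 := ((h1.sub_const (s : ℂ)).const_mul (-(2 * Real.pi * n) : ℂ)).sub_const
    (ε * I * b / 4 : ℂ)
  have := h.unique h2
  simpa using this

theorem dY_ladW (n : ℤ) (s b ε : ℝ) (p : ℝ × ℝ) : dY (ladW n s b ε) p = 0 := by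
  have h := hasDerivAt_dY (ladW_contDiff n s b ε) p.1 p.2
  have h2 : HasDerivAt (fun t => ladW n s b ε (p.1, t)) 0 p.2 :=
    hasDerivAt_const p.2 (ladW n s b ε (p.1, 0))
  exact h.unique h2

theorem ladFun_contDiff (n : ℤ) (s b ε : ℝ) {u : ℝ × ℝ → ℂ} (hu : ContDiff ℝ ∞ u) :
    ContDiff ℝ ∞ (ladFun n s b ε u) := by
  unfold ladFun
  have := ofReal_fst_contDiff
  have := dX_contDiff hu
  have := dY_contDiff hu
  fun_prop

theorem ladFun_mem (n : ℤ) (s b ε : ℝ) {u : ℝ × ℝ → ℂ} (hu : u ∈ QP n) :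
    ladFun n s b ε u ∈ QP n := by
  obtain ⟨hs, h1, h2⟩ := hu
  refine ⟨ladFun_contDiff n s b ε hs, fun x y => ?_, fun x y => ?_⟩
  · have e1 : dX u (x, y + 1) = dX u (x, y) := by
      have h := hasDerivAt_dX hs x (y + 1)
      simp only [h1] at h
      exact h.unique (hasDerivAt_dX hs x y)
    have e2 : dY u (x, y + 1) = dY u (x, y) := by
      have h := (hasDerivAt_dY hs x (y + 1)).comp_add_const y 1
      simp only [h1] at h
      exact h.unique (hasDerivAt_dY hs x y)
    simp only [ladFun, e1, e2, h1]
  · have e1 : dX u (x + 1, y) = chr (-n) y * dX u (x, y) := by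
      have h := (hasDerivAt_dX hs (x + 1) y).comp_add_const x 1
      simp only [h2] at h
      exact h.unique ((hasDerivAt_dX hs x y).const_mul _)
    have e2 : dY u (x + 1, y) = 2 * Real.pi * (-n : ℤ) * I * chr (-n) y * u (x, y) +
        chr (-n) y * dY u (x, y) := by
      have h := hasDerivAt_dY hs (x + 1) y
      simp only [h2] at h
      exact h.unique ((chr_hasDerivAt (-n) y).mul (hasDerivAt_dY hs x y))
    simp only [ladFun, e1, e2, h2]
    push_cast
    linear_combination (-(2 * Real.pi * n) * chr (-n) y * u (x, y)) * I_sq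

/-- The operator `ladFun` on quasi-periodic functions. -/
noncomputable def lad (n : ℤ) (s b ε : ℝ) : QP n →ₗ[ℂ] QP n where
  toFun u := ⟨ladFun n s b ε u, ladFun_mem n s b ε u.2⟩
  map_add' u v := by
    ext p
    have h1 := dX_add u.2.1 v.2.1 p
    have h2 := dY_add u.2.1 v.2.1 p
    have e : ((u + v : QP n) : ℝ × ℝ → ℂ) = fun p => u.1 p + v.1 p := rfl
    change ladFun n s b ε (u + v : QP n).1 p = ladFun n s b ε u.1 p + ladFun n s b ε v.1 p
    simp only [ladFun, e, h1, h2]; ring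
  map_smul' c u := by
    ext p
    have h1 := dX_mul (contDiff_const (c := c)) u.2.1 p
    have h2 := dY_mul (contDiff_const (c := c)) u.2.1 p
    have e : ((c • u : QP n) : ℝ × ℝ → ℂ) = fun p => c * u.1 p := rfl
    change ladFun n s b ε (c • u : QP n).1 p = c * ladFun n s b ε u.1 p
    simp only [ladFun, e, h1, h2, dX_const, dY_const]; ring

/-- The canonical commutation relation between the two ladder operators. -/
theorem lad_comm (n : ℤ) (s b : ℝ) (u : QP n) :
    lad n s b 1 (lad n s b (-1) u) =
      lad n s b (-1) (lad n s b 1 u) - (2 * (2 * Real.pi * n) : ℂ) • u := by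
  ext p
  have hs := u.2.1
  have cX := dX_contDiff hs
  have cY := dY_contDiff hs
  have key : ∀ ε : ℝ, dX (ladFun n s b ε u.1) p = ε * dX (dX u.1) p + I * dX (dY u.1) p +
      (-(2 * Real.pi * n) * u.1 p + ladW n s b ε p * dX u.1 p) ∧
      dY (ladFun n s b ε u.1) p = ε * dY (dX u.1) p + I * dY (dY u.1) p +
      (ladW n s b ε p * dY u.1 p) := by
    intro ε
    have e : ladFun n s b ε u.1 = fun p => (ε * dX u.1 p + I * dY u.1 p) +
      ladW n s b ε p * u.1 p := rfl
    have c1 : ContDiff ℝ ∞ (fun p => (ε : ℂ) * dX u.1 p) := contDiff_const.mul cX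
    have c2 : ContDiff ℝ ∞ (fun p => I * dY u.1 p) := contDiff_const.mul cY
    have c3 : ContDiff ℝ ∞ (fun p => ladW n s b ε p * u.1 p) := (ladW_contDiff n s b ε).mul hs
    rw [e, dX_add (c1.add c2) c3, dX_add c1 c2, dX_mul contDiff_const cX,
      dX_mul contDiff_const cY, dX_mul (ladW_contDiff n s b ε) hs, dX_const, dX_const, dX_ladW,
      dY_add (c1.add c2) c3, dY_add c1 c2, dY_mul contDiff_const cX,
      dY_mul contDiff_const cY, dY_mul (ladW_contDiff n s b ε) hs, dY_const, dY_const, dY_ladW]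
    constructor <;> ring
  change ladFun n s b 1 (ladFun n s b (-1) u.1) p = ladFun n s b (-1) (ladFun n s b 1 u.1) p -
    (2 * (2 * Real.pi * n) : ℂ) * u.1 p
  rw [ladFun, ladFun.eq_def n s b (-1) (ladFun n s b 1 u.1), (key _).1, (key _).2, (key _).1,
    (key _).2, dX_dY hs, ladFun, ladFun]
  unfold ladW
  push_cast
  ring

/-- The `L²` pairing over the unit square. -/
noncomputable def ip (u v : ℝ × ℝ → ℂ) : ℂ :=
  ∫ x in (0 : ℝ)..1, ∫ y in (0 : ℝ)..1, u (x, y) * (starRingEnd ℂ) (v (x, y))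

theorem integral_dX_zero {F : ℝ × ℝ → ℂ} (hF : ContDiff ℝ ∞ F)
    (hper : ∀ x y, F (x + 1, y) = F (x, y)) :
    ∫ x in (0 : ℝ)..1, ∫ y in (0 : ℝ)..1, dX F (x, y) = 0 := by
  have hd : ∀ x, HasDerivAt (fun x => ∫ y in (0 : ℝ)..1, F (x, y))
      (∫ y in (0 : ℝ)..1, dX F (x, y)) x := by
    intro x
    have := hasDerivAt_param F hF x
    have e : ∀ y, deriv (fun u => F (u, y)) x = dX F (x, y) := fun y =>
      (hasDerivAt_dX hF x y).deriv
    simpa only [e] using this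
  rw [intervalIntegral.integral_eq_sub_of_hasDerivAt (fun x _ => hd x)]
  · have := hper 0
    simp only [zero_add] at this
    simp [this]
  · exact (contDiff_param _ (dX_contDiff hF)).continuous.intervalIntegrable _ _

theorem integral_dY_zero {F : ℝ × ℝ → ℂ} (hF : ContDiff ℝ ∞ F)
    (hper : ∀ x y, F (x, y + 1) = F (x, y)) :
    ∫ x in (0 : ℝ)..1, ∫ y in (0 : ℝ)..1, dY F (x, y) = 0 := by
  have : ∀ x, ∫ y in (0 : ℝ)..1, dY F (x, y) = 0 := by
    intro x
    rw [intervalIntegral.integral_eq_sub_of_hasDerivAt (fun y _ => hasDerivAt_dY hF x y)]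
    · have := hper x 0
      simp only [zero_add] at this
      simp [this]
    · exact ((dY_contDiff hF).continuous.comp (Continuous.prodMk_right x)).intervalIntegrable _ _
  simp [this]

theorem integral2_add {F G : ℝ × ℝ → ℂ} (hF : ContDiff ℝ ∞ F) (hG : ContDiff ℝ ∞ G) :
    ∫ x in (0 : ℝ)..1, ∫ y in (0 : ℝ)..1, (F (x, y) + G (x, y)) =
      (∫ x in (0 : ℝ)..1, ∫ y in (0 : ℝ)..1, F (x, y)) +
      ∫ x in (0 : ℝ)..1, ∫ y in (0 : ℝ)..1, G (x, y) := by
  rw [← intervalIntegral.integral_add ((contDiff_param _ hF).continuous.intervalIntegrable _ _)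
    ((contDiff_param _ hG).continuous.intervalIntegrable _ _)]
  congr 1; ext x
  exact intervalIntegral.integral_add
    ((hF.continuous.comp (Continuous.prodMk_right x)).intervalIntegrable _ _)
    ((hG.continuous.comp (Continuous.prodMk_right x)).intervalIntegrable _ _)

theorem integral2_const_mul (c : ℂ) (F : ℝ × ℝ → ℂ) :
    ∫ x in (0 : ℝ)..1, ∫ y in (0 : ℝ)..1, c * F (x, y) =
      c * ∫ x in (0 : ℝ)..1, ∫ y in (0 : ℝ)..1, F (x, y) := by
  simp only [intervalIntegral.integral_const_mul]

theorem conj_contDiff {v : ℝ × ℝ → ℂ} (hv : ContDiff ℝ ∞ v) :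
    ContDiff ℝ ∞ (fun p => (starRingEnd ℂ) (v p)) :=
  conjCLE.toContinuousLinearMap.contDiff.comp hv

theorem chr_conj (n : ℤ) (s : ℝ) : chr n s * (starRingEnd ℂ) (chr n s) = 1 := by
  rw [chr, ← exp_conj, ← exp_add, ← exp_zero]
  congr 1
  simp only [map_mul, conj_ofReal, conj_I, map_ofNat, map_intCast]
  ring

/-- Integration by parts on the unit square. The boundary terms cancel because `u · conj v` is
periodic when `u` and `v` have the same quasi-period. -/
theorem ip_adjoint (n : ℤ) (s b ε : ℝ) (u v : QP n) :
    ip (lad n s b ε u) v = ip u (lad n s b (-ε) v) := by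
  have hu := u.2.1
  have hv := v.2.1
  have hv' := conj_contDiff hv
  set F : ℝ × ℝ → ℂ := fun p => u.1 p * (starRingEnd ℂ) (v.1 p) with hFdef
  have hF : ContDiff ℝ ∞ F := hu.mul hv'
  have e : ∀ x y, ladFun n s b ε u.1 (x, y) * (starRingEnd ℂ) (v.1 (x, y)) =
      u.1 (x, y) * (starRingEnd ℂ) (ladFun n s b (-ε) v.1 (x, y)) +
        (ε * dX F (x, y) + I * dY F (x, y)) := by
    intro x y
    rw [hFdef, dX_mul hu hv', dY_mul hu hv', dX_conj hv, dY_conj hv]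
    simp only [ladFun, map_add, map_mul, map_sub, map_neg, conj_ofReal, conj_I, map_ofNat,
      map_intCast, map_div₀, ofReal_neg]
    ring
  change ∫ x in (0 : ℝ)..1, ∫ y in (0 : ℝ)..1,
    ladFun n s b ε u.1 (x, y) * (starRingEnd ℂ) (v.1 (x, y)) = ∫ x in (0 : ℝ)..1,
    ∫ y in (0 : ℝ)..1, u.1 (x, y) * (starRingEnd ℂ) (ladFun n s b (-ε) v.1 (x, y))
  simp only [e]
  have cX := dX_contDiff hF
  have cY := dY_contDiff hF
  rw [integral2_add (F := fun p => u.1 p * (starRingEnd ℂ) (ladFun n s b (-ε) v.1 p))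
      (G := fun p => ε * dX F p + I * dY F p)
      (hu.mul (conj_contDiff (ladFun_contDiff n s b (-ε) hv)))
      ((contDiff_const.mul cX).add (contDiff_const.mul cY)),
    integral2_add (F := fun p => ε * dX F p) (G := fun p => I * dY F p)
      (contDiff_const.mul cX) (contDiff_const.mul cY), integral2_const_mul, integral2_const_mul,
    integral_dX_zero hF, integral_dY_zero hF]
  · simp
  · intro x y; simp only [hFdef, u.2.2.1, v.2.2.1]
  · intro x y
    simp only [hFdef, u.2.2.2, v.2.2.2, map_mul]
    linear_combination (u.1 (x, y) * (starRingEnd ℂ) (v.1 (x, y))) * chr_conj (-n) y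

theorem ip_smul (c : ℂ) (u v : ℝ × ℝ → ℂ) : ip (c • u) v = c * ip u v := by
  unfold ip
  rw [← integral2_const_mul c (fun p => u p * (starRingEnd ℂ) (v p))]
  simp [mul_assoc]

theorem ip_self (u : ℝ × ℝ → ℂ) :
    ip u u = (∫ x in (0 : ℝ)..1, ∫ y in (0 : ℝ)..1, normSq (u (x, y)) : ℝ) := by
  unfold ip
  simp only [mul_conj, intervalIntegral.integral_ofReal]

theorem zero_of_integral_zero (h : ℝ → ℝ) (hc : Continuous h) (h0 : ∀ s, 0 ≤ h s)
    (hi : ∫ s in (0 : ℝ)..1, h s = 0) (s : ℝ) (hs : s ∈ Set.Icc (0 : ℝ) 1) : h s = 0 := by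
  by_contra hne
  have := intervalIntegral.integral_pos (f := h) zero_lt_one hc.continuousOn
    (fun x _ => h0 x) ⟨s, hs, lt_of_le_of_ne (h0 s) (Ne.symm hne)⟩
  exact this.ne' hi

theorem ip_pos (u : ℝ × ℝ → ℂ) : ∃ r : ℝ, 0 ≤ r ∧ ip u u = r := by
  refine ⟨_, ?_, ip_self u⟩
  refine intervalIntegral.integral_nonneg zero_le_one fun x _ => ?_
  exact intervalIntegral.integral_nonneg zero_le_one fun y _ => normSq_nonneg _

theorem ip_def (n : ℤ) (u : QP n) (h : ip u u = 0) : u = 0 := by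
  rw [ip_self, ofReal_eq_zero] at h
  have hc : Continuous (fun p : ℝ × ℝ => normSq (u.1 p)) :=
    continuous_normSq.comp u.2.1.continuous
  have hc1 : Continuous (fun x : ℝ => ∫ y in (0 : ℝ)..1, normSq (u.1 (x, y))) := by
    have h' : Continuous (Function.uncurry fun x y => normSq (u.1 (x, y))) := hc
    exact intervalIntegral.continuous_parametric_intervalIntegral_of_continuous' h' 0 1
  have h1 : ∀ x ∈ Set.Icc (0 : ℝ) 1, ∀ y ∈ Set.Icc (0 : ℝ) 1, u.1 (x, y) = 0 := by
    intro x hx y hy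
    have := zero_of_integral_zero _ hc1
      (fun x => intervalIntegral.integral_nonneg zero_le_one fun y _ => normSq_nonneg _) h x hx
    have := zero_of_integral_zero (fun y => normSq (u.1 (x, y)))
      (hc.comp (Continuous.prodMk_right x)) (fun y => normSq_nonneg _) this y hy
    exact normSq_eq_zero.1 this
  have hper : ∀ x, Function.Periodic (fun y => u.1 (x, y)) 1 := fun x y => u.2.2.1 x y
  have h2 : ∀ x ∈ Set.Icc (0 : ℝ) 1, ∀ y, u.1 (x, y) = 0 := by
    intro x hx y
    obtain ⟨y', hy', e⟩ := (hper x).exists_mem_Ico₀ one_pos y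
    have e' : u.1 (x, y) = u.1 (x, y') := e
    rw [e', h1 x hx y' ⟨hy'.1, hy'.2.le⟩]
  have hper2 : ∀ y, Function.Periodic (fun x => normSq (u.1 (x, y))) 1 := by
    intro y x
    have := chr_conj (-n) y
    rw [mul_conj] at this
    have : normSq (chr (-n) y) = 1 := by exact_mod_cast this
    simp only [u.2.2.2, normSq_mul, this, one_mul]
  ext ⟨x, y⟩
  obtain ⟨x', hx', e⟩ := (hper2 y).exists_mem_Ico₀ one_pos x
  have e' : normSq (u.1 (x, y)) = normSq (u.1 (x', y)) := e
  rw [h2 x' ⟨hx'.1, hx'.2.le⟩ y, normSq_zero] at e'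
  exact normSq_eq_zero.1 e'

/-- Write `A` and `B` for the operators `lad` with `ε = 1` and `ε = -1`. They are mutually adjoint and
`AB = BA - 4πn`, so the eigenvalues of `BA` on `QP n`, `n ≠ 0`, are integer multiples of `4πn`. The
sign of `n` decides which of the two operators lowers eigenvalues. -/
theorem lad_spectrum (n : ℤ) (hn : n ≠ 0) (s b : ℝ) (u : QP n) (hu : u ≠ 0) (l : ℂ)
    (h : lad n s b (-1) (lad n s b 1 u) = l • u) : ∃ j : ℤ, l = 2 * (2 * Real.pi * n) * j := by
  have hsm : ∀ (c : ℂ) (u v : QP n), ip (c • u : QP n) v = c * ip u v := fun c u v =>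
    ip_smul c u.1 v.1
  rcases lt_or_gt_of_ne hn with hneg | hpos
  · set M : ℝ := -(2 * (2 * Real.pi * n)) with hM
    have hMp : 0 < M := by
      have : (n : ℝ) < 0 := by exact_mod_cast hneg
      have := mul_neg_of_pos_of_neg Real.pi_pos this
      rw [hM]; linarith
    have hcomm : ∀ u, lad n s b (-1) (lad n s b 1 u) =
        lad n s b 1 (lad n s b (-1) u) - (M : ℂ) • u := by
      intro u; rw [lad_comm, hM]; push_cast; module
    obtain ⟨k, hk⟩ := exists_nat_gt ((l + M).re / M)
    obtain ⟨j, hj⟩ := ladder (lad n s b (-1)) (lad n s b 1) (fun u v => ip u.1 v.1) hsm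
      (fun u v => ip_adjoint n s b 1 u v) (fun u => ip_pos u.1) (fun u => ip_def n u) M hcomm k
      (l + M) u hu (by rw [add_smul, ← h, hcomm]; abel)
      (by rw [div_lt_iff₀ hMp] at hk; linarith)
    refine ⟨1 - j, ?_⟩
    rw [hM] at hj
    push_cast at hj ⊢
    linear_combination hj
  · set M : ℝ := 2 * (2 * Real.pi * n) with hM
    have hMp : 0 < M := by
      have : (0 : ℝ) < n := by exact_mod_cast hpos
      have := Real.pi_pos
      rw [hM]; positivity
    have hcomm : ∀ u, lad n s b 1 (lad n s b (-1) u) =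
        lad n s b (-1) (lad n s b 1 u) - (M : ℂ) • u := by
      intro u; rw [lad_comm, hM]; push_cast; rfl
    obtain ⟨k, hk⟩ := exists_nat_gt (l.re / M)
    obtain ⟨j, hj⟩ := ladder (lad n s b 1) (lad n s b (-1)) (fun u v => ip u.1 v.1) hsm
      (fun u v => by simpa using ip_adjoint n s b (-1) u v) (fun u => ip_pos u.1)
      (fun u => ip_def n u) M hcomm k l u hu h
      (by rw [div_lt_iff₀ hMp] at hk; linarith)
    refine ⟨j, ?_⟩
    rw [hj, hM]; push_cast; ring

/-! ### Vanishing of the modes of nonzero `z`-frequency -/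

/-- A solution of the mode equations at a nonzero `z`-frequency `n` vanishes: the
equations amount to `A (φ + γ) = (μ - i c) (φ - γ)` and `B (φ - γ) = -(μ + i c) (φ + γ)` with
`μ = 2πk - i b / 4` and `c = 2πn / b`. Hence `BA` has the eigenvalue `-(μ² + c²)` on `φ + γ`, but by
`no_resonance` this number is not a multiple of `4πn`. -/
theorem mode_zero (p q n k : ℤ) (hp : p ≠ 0) (hq : q ≠ 0) (hn : n ≠ 0) (a b : ℝ)
    (hb : b = 8 * Real.pi * (p : ℝ) / (q : ℝ)) (φ γ : QP n)
    (h1 : ∀ x y : ℝ, -((1 / 2) * (dY φ.1 (x, y) + x * (2 * Real.pi * n * I * φ.1 (x, y)) -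
        ((a + I) / b) * (2 * Real.pi * n * I * φ.1 (x, y)))) +
      (1 / 2) * (2 * Real.pi * k * I * γ.1 (x, y) + I * dX γ.1 (x, y)) +
      (b / 4) * γ.1 (x, y) = 0)
    (h2 : ∀ x y : ℝ, (1 / 2) * (2 * Real.pi * k * I * φ.1 (x, y) - I * dX φ.1 (x, y)) +
      (1 / 2) * (dY γ.1 (x, y) + x * (2 * Real.pi * n * I * γ.1 (x, y)) -
        ((a - I) / b) * (2 * Real.pi * n * I * γ.1 (x, y))) = 0) :
    φ = 0 ∧ γ = 0 := by
  have hb0 : b ≠ 0 := by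
    rw [hb]
    have : (p : ℝ) ≠ 0 := by exact_mod_cast hp
    have : (q : ℝ) ≠ 0 := by exact_mod_cast hq
    have := Real.pi_ne_zero
    positivity
  have hbC : (b : ℂ) ≠ 0 := by exact_mod_cast hb0
  set μ : ℂ := 2 * Real.pi * k - I * b / 4 with hμ
  set c : ℂ := 2 * Real.pi * n / b with hc
  have hA : lad n (a / b) b 1 (φ + γ) = (μ - I * c) • (φ - γ) := by
    rw [map_add]
    ext ⟨x, y⟩
    change ladFun n (a / b) b 1 φ.1 (x, y) + ladFun n (a / b) b 1 γ.1 (x, y) =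
      (μ - I * c) * (φ.1 (x, y) - γ.1 (x, y))
    have e1 := h1 x y
    have e2 := h2 x y
    simp only [ladFun, hμ, hc]
    push_cast
    linear_combination (-2 * I) * e1 + (2 * I) * e2 +
      (-(x * (2 * Real.pi * n) * φ.1 (x, y) - a / b * (2 * Real.pi * n) * φ.1 (x, y) -
          2 * Real.pi * k * γ.1 (x, y) - dX γ.1 (x, y)) +
        I * (2 * Real.pi * n) / b * φ.1 (x, y)) * I_sq +
      (-(2 * Real.pi * k * φ.1 (x, y) - dX φ.1 (x, y) + x * (2 * Real.pi * n) * γ.1 (x, y) -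
          a / b * (2 * Real.pi * n) * γ.1 (x, y)) -
        I * (2 * Real.pi * n) / b * γ.1 (x, y)) * I_sq
  have hB : lad n (a / b) b (-1) (φ - γ) = (-(μ + I * c)) • (φ + γ) := by
    rw [map_sub]
    ext ⟨x, y⟩
    change ladFun n (a / b) b (-1) φ.1 (x, y) - ladFun n (a / b) b (-1) γ.1 (x, y) =
      (-(μ + I * c)) * (φ.1 (x, y) + γ.1 (x, y))
    have e1 := h1 x y
    have e2 := h2 x y
    simp only [ladFun, hμ, hc]
    push_cast
    linear_combination (-2 * I) * e1 - (2 * I) * e2 +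
      (-(x * (2 * Real.pi * n) * φ.1 (x, y) - a / b * (2 * Real.pi * n) * φ.1 (x, y) -
          2 * Real.pi * k * γ.1 (x, y) - dX γ.1 (x, y)) +
        I * (2 * Real.pi * n) / b * φ.1 (x, y)) * I_sq -
      (-(2 * Real.pi * k * φ.1 (x, y) - dX φ.1 (x, y) + x * (2 * Real.pi * n) * γ.1 (x, y) -
          a / b * (2 * Real.pi * n) * γ.1 (x, y)) -
        I * (2 * Real.pi * n) / b * γ.1 (x, y)) * I_sq
  have key : ∀ j : ℤ, -(μ ^ 2 + c ^ 2) ≠ 2 * (2 * Real.pi * n) * j := by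
    intro j hj
    have him := congrArg Complex.im hj
    have hre := congrArg Complex.re hj
    have e : -(μ ^ 2 + c ^ 2) = ((b ^ 2 / 16 - (2 * Real.pi * n) ^ 2 / b ^ 2 -
      (2 * Real.pi * k) ^ 2 : ℝ) : ℂ) + ((Real.pi * k * b : ℝ) : ℂ) * I := by
      rw [hμ, hc]; push_cast
      linear_combination (-(b : ℂ) ^ 2 / 16) * I_sq
    have e2 : (2 * (2 * Real.pi * n) * j : ℂ) = ((2 * (2 * Real.pi * n) * j : ℝ) : ℂ) := by
      push_cast; rfl
    rw [e, e2] at him hre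
    simp only [add_re, add_im, ofReal_re, ofReal_im, re_ofReal_mul, im_ofReal_mul, I_re, I_im] at him hre
    have hk : (k : ℝ) = 0 := by
      have : Real.pi * k * b = 0 := by linarith
      simpa [Real.pi_ne_zero, hb0] using this
    refine no_resonance p q n j hp hq hn b hb ?_
    rw [hk] at hre
    linear_combination hre
  have hS : φ + γ = 0 := by
    by_contra hS
    obtain ⟨j, hj⟩ := lad_spectrum n hn (a / b) b (φ + γ) hS (-(μ ^ 2 + c ^ 2)) (by
      rw [hA, map_smul, hB, smul_smul]
      congr 1
      linear_combination (c ^ 2) * I_sq)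
    exact key j hj
  have hD : φ - γ = 0 := by
    by_contra hD
    rw [hS, map_zero] at hA
    have := (smul_eq_zero.1 hA.symm).resolve_right hD
    refine key 0 ?_
    push_cast
    linear_combination (-(μ + I * c)) * this + (-(c ^ 2)) * I_sq
  have : φ = γ := sub_eq_zero.1 hD
  rw [this] at hS ⊢
  have : (2 : ℂ) • γ = 0 := by rw [two_smul]; exact hS
  have := (smul_eq_zero.1 this).resolve_left two_ne_zero
  exact ⟨this, this⟩

/-! ### Fourier modes of functions on `KT⁴` -/

/-- A translation multiplies the Fourier coefficients by characters. This makes the `z`-modes of a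
KT-periodic function quasi-periodic in `x`. -/
theorem coef_shift (n : ℤ) (h : ℝ → ℂ) (hp : ∀ s, h (s + 1) = h s) (y : ℝ) :
    coef n (fun z => h (z - y)) = chr (-n) y * coef n h := by
  unfold coef
  have hper : Function.Periodic (fun z => chr (-n) z * h z) 1 := fun z => by
    simp only [chr_periodic, hp]
  have e : ∀ z, chr (-n) z * h (z - y) = chr (-n) y * (chr (-n) (z - y) * h (z - y)) := by
    intro z
    rw [← mul_assoc, ← chr_add]
    congr 2; ring
  simp only [e]
  rw [intervalIntegral.integral_const_mul,
    intervalIntegral.integral_comp_sub_right (fun z => chr (-n) z * h z) y]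
  congr 1
  have := hper.intervalIntegral_add_eq (0 - y) 0
  rw [zero_add] at this
  rw [← this]
  congr 1; ring

theorem coef_contDiff {E : Type} [NormedAddCommGroup E] [NormedSpace ℝ E]
    [FiniteDimensional ℝ E] (n : ℤ) {f : E × ℝ → ℂ} (hf : ContDiff ℝ ∞ f) :
    ContDiff ℝ ∞ (fun e => coef n (fun s => f (e, s))) :=
  contDiff_param (fun p : E × ℝ => chr (-n) p.2 * f p)
    (((chr_contDiff (-n)).comp contDiff_snd).mul hf)

theorem coef_hasDerivAt (n : ℤ) {f : ℝ × ℝ → ℂ} (hf : ContDiff ℝ ∞ f) (x : ℝ) :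
    HasDerivAt (fun x => coef n (fun s => f (x, s))) (coef n (fun s => dX f (x, s))) x := by
  have h := hasDerivAt_param (fun p : ℝ × ℝ => chr (-n) p.2 * f p)
    (((chr_contDiff (-n)).comp contDiff_snd).mul hf) x
  have e : ∀ s, deriv (fun u => chr (-n) s * f (u, s)) x = chr (-n) s * dX f (x, s) := fun s =>
    ((hasDerivAt_dX hf x s).const_mul _).deriv
  simp only [e] at h
  exact h

/-- The Fourier coefficient, at the frequency `(k, n)`, of a function on the torus `ℝ²/ℤ²`. -/
noncomputable def hat2 (k n : ℤ) (u : ℝ × ℝ → ℂ) : ℂ :=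
  coef k (fun s => coef n (fun r => u (s, r)))

theorem hat2_add (k n : ℤ) {u v : ℝ × ℝ → ℂ} (hu : ContDiff ℝ ∞ u) (hv : ContDiff ℝ ∞ v) :
    hat2 k n (fun p => u p + v p) = hat2 k n u + hat2 k n v := by
  unfold hat2
  rw [← coef_add _ _ _ (coef_contDiff n hu).continuous (coef_contDiff n hv).continuous]
  congr 1; ext s
  exact coef_add _ _ _ (hu.continuous.comp (Continuous.prodMk_right s))
    (hv.continuous.comp (Continuous.prodMk_right s))

theorem hat2_const_mul (k n : ℤ) (c : ℂ) (u : ℝ × ℝ → ℂ) :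
    hat2 k n (fun p => c * u p) = c * hat2 k n u := by
  unfold hat2
  simp only [coef_const_mul]

theorem hat2_zero (k n : ℤ) : hat2 k n (fun _ => 0) = 0 := by
  simp [hat2, coef]

theorem hat2_dY (k n : ℤ) {u : ℝ × ℝ → ℂ} (hu : ContDiff ℝ ∞ u)
    (hp : ∀ x y, u (x, y + 1) = u (x, y)) :
    hat2 k n (dY u) = 2 * Real.pi * n * I * hat2 k n u := by
  unfold hat2
  rw [← coef_const_mul]
  congr 1; ext s
  rw [← coef_deriv n (fun r => u (s, r)) (hu.comp (contDiff_prodMk_right s)) (hp s)]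
  congr 1; ext r
  exact (hasDerivAt_dY hu s r).deriv.symm

theorem hat2_dX (k n : ℤ) {u : ℝ × ℝ → ℂ} (hu : ContDiff ℝ ∞ u)
    (hp : ∀ x y, u (x + 1, y) = u (x, y)) :
    hat2 k n (dX u) = 2 * Real.pi * k * I * hat2 k n u := by
  unfold hat2
  rw [← coef_deriv k _ (coef_contDiff n hu) (fun s => by simp only [hp])]
  congr 1; ext s
  exact (coef_hasDerivAt n hu s).deriv.symm

/-- A smooth function on the torus whose Fourier coefficients vanish outside a finite set is the
corresponding trigonometric polynomial. -/
theorem eq_sum_hat2 {u : ℝ × ℝ → ℂ} (hu : ContDiff ℝ ∞ u)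
    (hp1 : ∀ x y, u (x + 1, y) = u (x, y)) (hp2 : ∀ x y, u (x, y + 1) = u (x, y))
    (T : Finset (ℤ × ℤ)) (hT : ∀ c ∉ T, hat2 c.1 c.2 u = 0) (s r : ℝ) :
    u (s, r) = ∑ c ∈ T, hat2 c.1 c.2 u * (chr c.1 s * chr c.2 r) := by
  have hv : ∀ n s, coef n (fun r => u (s, r)) =
      ∑ k ∈ T.image Prod.fst, hat2 k n u * chr k s := by
    intro n s
    refine eq_sum_coef (fun s => coef n (fun r => u (s, r))) (coef_contDiff n hu).continuous
      (fun s => by simp only [hp1]) _ (fun k hk => hT (k, n) fun h => hk ?_) s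
    exact Finset.mem_image_of_mem Prod.fst h
  have h1 := eq_sum_coef (fun r => u (s, r)) (hu.continuous.comp (Continuous.prodMk_right s))
    (hp2 s) (T.image Prod.snd) (fun n hn => by
      rw [hv]
      refine Finset.sum_eq_zero fun k _ => ?_
      rw [hT (k, n) fun h => hn (Finset.mem_image_of_mem Prod.snd h), zero_mul]) r
  have h2 : u (s, r) = ∑ c ∈ T.image Prod.fst ×ˢ T.image Prod.snd,
      hat2 c.1 c.2 u * (chr c.1 s * chr c.2 r) := by
    rw [Finset.sum_product_right]
    simp only [h1, hv, Finset.sum_mul]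
    refine Finset.sum_congr rfl fun n _ => Finset.sum_congr rfl fun k _ => ?_
    ring
  rw [h2]
  symm
  refine Finset.sum_subset (fun c hc => ?_) (fun c _ hc => by rw [hT c hc, zero_mul])
  exact Finset.mem_product.2 ⟨Finset.mem_image_of_mem _ hc, Finset.mem_image_of_mem _ hc⟩

theorem Smooth4.comp {f : F4} (hf : Smooth4 f) {E : Type} [NormedAddCommGroup E]
    [NormedSpace ℝ E] {t x y z : E → ℝ} (ht : ContDiff ℝ ∞ t) (hx : ContDiff ℝ ∞ x)
    (hy : ContDiff ℝ ∞ y) (hz : ContDiff ℝ ∞ z) :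
    ContDiff ℝ ∞ (fun e => f (t e) (x e) (y e) (z e)) :=
  ContDiff.comp hf (ht.prodMk (hx.prodMk (hy.prodMk hz)))

theorem Smooth4.hasDerivAt_t {f : F4} (hf : Smooth4 f) (t x y z : ℝ) :
    HasDerivAt (fun s => f s x y z) (pT f t x y z) t :=
  ((hf.comp contDiff_id contDiff_const contDiff_const contDiff_const).differentiable
    (by simp) t).hasDerivAt

theorem Smooth4.hasDerivAt_x {f : F4} (hf : Smooth4 f) (t x y z : ℝ) :
    HasDerivAt (fun s => f t s y z) (pX f t x y z) x :=
  ((hf.comp contDiff_const contDiff_id contDiff_const contDiff_const).differentiable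
    (by simp) x).hasDerivAt

theorem Smooth4.hasDerivAt_y {f : F4} (hf : Smooth4 f) (t x y z : ℝ) :
    HasDerivAt (fun s => f t x s z) (pY f t x y z) y :=
  ((hf.comp contDiff_const contDiff_const contDiff_id contDiff_const).differentiable
    (by simp) y).hasDerivAt

theorem Smooth4.hasDerivAt_z {f : F4} (hf : Smooth4 f) (t x y z : ℝ) :
    HasDerivAt (fun s => f t x y s) (pZ f t x y z) z :=
  ((hf.comp contDiff_const contDiff_const contDiff_const contDiff_id).differentiable
    (by simp) z).hasDerivAt

/-- The slice of `f` at fixed `(x, y)`, as a function of `(t, z)`. -/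
def slice (f : F4) (x y : ℝ) (p : ℝ × ℝ) : ℂ := f p.1 x y p.2

theorem slice_contDiff {f : F4} (hf : Smooth4 f) (x y : ℝ) : ContDiff ℝ ∞ (slice f x y) :=
  hf.comp contDiff_fst contDiff_const contDiff_const contDiff_snd

theorem slice_pT {f : F4} (hf : Smooth4 f) (x y : ℝ) : slice (pT f) x y = dX (slice f x y) := by
  ext ⟨t, z⟩
  exact (hf.hasDerivAt_t t x y z).unique (hasDerivAt_dX (slice_contDiff hf x y) t z)

theorem slice_pZ {f : F4} (hf : Smooth4 f) (x y : ℝ) : slice (pZ f) x y = dY (slice f x y) := by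
  ext ⟨t, z⟩
  exact (hf.hasDerivAt_z t x y z).unique (hasDerivAt_dY (slice_contDiff hf x y) t z)

theorem slice_pX_contDiff {f : F4} (hf : Smooth4 f) (x y : ℝ) :
    ContDiff ℝ ∞ (slice (pX f) x y) := by
  have h : ∀ p, slice (pX f) x y p = fderiv ℝ (fun p : ℝ × ℝ × ℝ × ℝ =>
      f p.1 p.2.1 p.2.2.1 p.2.2.2) (p.1, x, y, p.2) (0, 1, 0, 0) := by
    intro p
    have h1 := (ContDiff.differentiable hf (by simp) (p.1, x, y, p.2)).hasFDerivAt
    have h2 : HasDerivAt (fun s : ℝ => (p.1, s, y, p.2)) (0, 1, 0, 0) x :=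
      (hasDerivAt_const x p.1).prodMk ((hasDerivAt_id x).prodMk
        ((hasDerivAt_const x y).prodMk (hasDerivAt_const x p.2)))
    have h3 := h1.comp_hasDerivAt x h2
    exact (hf.hasDerivAt_x p.1 x y p.2).unique h3
  rw [funext h]
  exact (((ContDiff.fderiv_right (m := ∞) hf (by simp)).comp (contDiff_fst.prodMk
    (contDiff_const.prodMk (contDiff_const.prodMk contDiff_snd)))).clm_apply contDiff_const)

theorem slice_pY_contDiff {f : F4} (hf : Smooth4 f) (x y : ℝ) :
    ContDiff ℝ ∞ (slice (pY f) x y) := by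
  have h : ∀ p, slice (pY f) x y p = fderiv ℝ (fun p : ℝ × ℝ × ℝ × ℝ =>
      f p.1 p.2.1 p.2.2.1 p.2.2.2) (p.1, x, y, p.2) (0, 0, 1, 0) := by
    intro p
    have h1 := (ContDiff.differentiable hf (by simp) (p.1, x, y, p.2)).hasFDerivAt
    have h2 : HasDerivAt (fun s : ℝ => (p.1, x, s, p.2)) (0, 0, 1, 0) y :=
      (hasDerivAt_const y p.1).prodMk ((hasDerivAt_const y x).prodMk
        ((hasDerivAt_id y).prodMk (hasDerivAt_const y p.2)))
    have h3 := h1.comp_hasDerivAt y h2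
    exact (hf.hasDerivAt_y p.1 x y p.2).unique h3
  rw [funext h]
  exact (((ContDiff.fderiv_right (m := ∞) hf (by simp)).comp (contDiff_fst.prodMk
    (contDiff_const.prodMk (contDiff_const.prodMk contDiff_snd)))).clm_apply contDiff_const)

/-- The Fourier mode of `f` of frequency `k` in `t` and `n` in `z`, a function of `(x, y)`. -/
noncomputable def modeFun (k n : ℤ) (f : F4) (p : ℝ × ℝ) : ℂ := hat2 k n (slice f p.1 p.2)

theorem modeFun_contDiff (k n : ℤ) {f : F4} (hf : Smooth4 f) : ContDiff ℝ ∞ (modeFun k n f) := by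
  have h1 : ContDiff ℝ ∞ (fun q : ((ℝ × ℝ) × ℝ) × ℝ => f q.1.2 q.1.1.1 q.1.1.2 q.2) :=
    hf.comp (by fun_prop) (by fun_prop) (by fun_prop) (by fun_prop)
  exact coef_contDiff k (f := fun q : (ℝ × ℝ) × ℝ => coef n (fun z => f q.2 q.1.1 q.1.2 z))
    (coef_contDiff n h1)

theorem dX_modeFun (k n : ℤ) {f : F4} (hf : Smooth4 f) (x y : ℝ) :
    dX (modeFun k n f) (x, y) = hat2 k n (slice (pX f) x y) := by
  have h1 : ContDiff ℝ ∞ (fun q : (ℝ × ℝ) × ℝ => f q.1.2 q.1.1 y q.2) :=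
    hf.comp (by fun_prop) (by fun_prop) (by fun_prop) (by fun_prop)
  have h2 := coef_contDiff n h1
  have h3 := coef_hasDerivAt k h2 x
  refine (hasDerivAt_dX (modeFun_contDiff k n hf) x y).unique ?_
  have e : ∀ t, dX (fun q : ℝ × ℝ => coef n (fun z => f q.2 q.1 y z)) (x, t) =
      coef n (fun z => pX f t x y z) := by
    intro t
    refine (hasDerivAt_dX h2 x t).unique ?_
    have h4 : ContDiff ℝ ∞ (fun q : ℝ × ℝ => f t q.1 y q.2) :=
      hf.comp (by fun_prop) (by fun_prop) (by fun_prop) (by fun_prop)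
    have h5 := coef_hasDerivAt n h4 x
    have e' : ∀ z, dX (fun q : ℝ × ℝ => f t q.1 y q.2) (x, z) = pX f t x y z := fun z =>
      (hasDerivAt_dX h4 x z).unique (hf.hasDerivAt_x t x y z)
    simp only [e'] at h5
    exact h5
  simp only [e] at h3
  exact h3

theorem dY_modeFun (k n : ℤ) {f : F4} (hf : Smooth4 f) (x y : ℝ) :
    dY (modeFun k n f) (x, y) = hat2 k n (slice (pY f) x y) := by
  have h1 : ContDiff ℝ ∞ (fun q : (ℝ × ℝ) × ℝ => f q.1.2 x q.1.1 q.2) :=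
    hf.comp (by fun_prop) (by fun_prop) (by fun_prop) (by fun_prop)
  have h2 := coef_contDiff n h1
  have h3 := coef_hasDerivAt k h2 y
  refine (hasDerivAt_dY (modeFun_contDiff k n hf) x y).unique ?_
  have e : ∀ t, dX (fun q : ℝ × ℝ => coef n (fun z => f q.2 x q.1 z)) (y, t) =
      coef n (fun z => pY f t x y z) := by
    intro t
    refine (hasDerivAt_dX h2 y t).unique ?_
    have h4 : ContDiff ℝ ∞ (fun q : ℝ × ℝ => f t x q.1 q.2) :=
      hf.comp (by fun_prop) (by fun_prop) (by fun_prop) (by fun_prop)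
    have h5 := coef_hasDerivAt n h4 y
    have e' : ∀ z, dX (fun q : ℝ × ℝ => f t x q.1 q.2) (y, z) = pY f t x y z := fun z =>
      (hasDerivAt_dX h4 y z).unique (hf.hasDerivAt_y t x y z)
    simp only [e'] at h5
    exact h5
  simp only [e] at h3
  exact h3

theorem slice_per1 {f : F4} (hf : KTPeriodic f) (x y t z : ℝ) :
    slice f x y (t + 1, z) = slice f x y (t, z) := (hf t x y z).1

theorem slice_per2 {f : F4} (hf : KTPeriodic f) (x y t z : ℝ) :
    slice f x y (t, z + 1) = slice f x y (t, z) := (hf t x y z).2.2.2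

theorem modeFun_mem (k n : ℤ) {f : F4} (hf : Smooth4 f) (hp : KTPeriodic f) :
    modeFun k n f ∈ QP n := by
  refine ⟨modeFun_contDiff k n hf, fun x y => ?_, fun x y => ?_⟩
  · have e : slice f x (y + 1) = slice f x y := funext fun q => (hp q.1 x y q.2).2.2.1
    simp only [modeFun, e]
  · have e : ∀ t, coef n (fun z => f t (x + 1) y z) = chr (-n) y * coef n (fun z => f t x y z) := by
      intro t
      rw [← coef_shift n _ (fun z => (hp t x y z).2.2.2)]
      congr 1; ext z
      have := (hp t x y (z - y)).2.1
      rwa [sub_add_cancel] at this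
    simp only [modeFun, hat2, slice, e, coef_const_mul]

/-- The modes of a solution, as quasi-periodic functions, satisfy the equations obtained by
replacing `∂_t` by `2πi k` and `∂_z` by `2πi n`. -/
theorem mode_eqs {a b : ℝ} {f g : F4} (h : (f, g) ∈ Sol a b) (k n : ℤ) (x y : ℝ) :
    (-((1 / 2) * (dY (modeFun k n f) (x, y) + x * (2 * Real.pi * n * I * modeFun k n f (x, y)) -
        ((a + I) / b) * (2 * Real.pi * n * I * modeFun k n f (x, y)))) +
      (1 / 2) * (2 * Real.pi * k * I * modeFun k n g (x, y) + I * dX (modeFun k n g) (x, y)) +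
      (b / 4) * modeFun k n g (x, y) = 0) ∧
    ((1 / 2) * (2 * Real.pi * k * I * modeFun k n f (x, y) - I * dX (modeFun k n f) (x, y)) +
      (1 / 2) * (dY (modeFun k n g) (x, y) + x * (2 * Real.pi * n * I * modeFun k n g (x, y)) -
        ((a - I) / b) * (2 * Real.pi * n * I * modeFun k n g (x, y))) = 0) := by
  obtain ⟨hf, hg, pf, pg, h1, h2⟩ := h
  simp only at hf hg pf pg h1 h2
  have sf := slice_contDiff hf x y
  have sg := slice_contDiff hg x y
  have fT : ContDiff ℝ ∞ (slice (pT f) x y) := by rw [slice_pT hf]; exact dX_contDiff sf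
  have gT : ContDiff ℝ ∞ (slice (pT g) x y) := by rw [slice_pT hg]; exact dX_contDiff sg
  have fZ : ContDiff ℝ ∞ (slice (pZ f) x y) := by rw [slice_pZ hf]; exact dY_contDiff sf
  have gZ : ContDiff ℝ ∞ (slice (pZ g) x y) := by rw [slice_pZ hg]; exact dY_contDiff sg
  have fX := slice_pX_contDiff hf x y
  have gX := slice_pX_contDiff hg x y
  have fY := slice_pY_contDiff hf x y
  have gY := slice_pY_contDiff hg x y
  have cm : ∀ (c : ℂ) {u : ℝ × ℝ → ℂ}, ContDiff ℝ ∞ u → ContDiff ℝ ∞ (fun p => c * u p) :=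
    fun c u hu => contDiff_const.mul hu
  have hfT : hat2 k n (slice (pT f) x y) = 2 * Real.pi * k * I * modeFun k n f (x, y) := by
    rw [slice_pT hf, hat2_dX k n sf (slice_per1 pf x y)]; rfl
  have hgT : hat2 k n (slice (pT g) x y) = 2 * Real.pi * k * I * modeFun k n g (x, y) := by
    rw [slice_pT hg, hat2_dX k n sg (slice_per1 pg x y)]; rfl
  have hfZ : hat2 k n (slice (pZ f) x y) = 2 * Real.pi * n * I * modeFun k n f (x, y) := by
    rw [slice_pZ hf, hat2_dY k n sf (slice_per2 pf x y)]; rfl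
  have hgZ : hat2 k n (slice (pZ g) x y) = 2 * Real.pi * n * I * modeFun k n g (x, y) := by
    rw [slice_pZ hg, hat2_dY k n sg (slice_per2 pg x y)]; rfl
  have hg0 : hat2 k n (slice g x y) = modeFun k n g (x, y) := rfl
  constructor
  · have e : (fun q => (-(1 / 2) : ℂ) * slice (pY f) x y q +
        ((-(1 / 2) * (x - (a + I) / b)) * slice (pZ f) x y q +
        ((1 / 2) * slice (pT g) x y q + ((1 / 2 * I) * slice (pX g) x y q +
        (b / 4) * slice g x y q)))) = fun _ => 0 := by
      ext q
      rw [← h1 q.1 x y q.2]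
      simp only [slice, V₂c, V₁c]
      ring
    have h0 := hat2_zero k n
    rw [← e, hat2_add _ _ (cm _ fY) ((cm _ fZ).add ((cm _ gT).add ((cm _ gX).add (cm _ sg)))),
      hat2_add _ _ (cm _ fZ) ((cm _ gT).add ((cm _ gX).add (cm _ sg))),
      hat2_add _ _ (cm _ gT) ((cm _ gX).add (cm _ sg)), hat2_add _ _ (cm _ gX) (cm _ sg)] at h0
    simp only [hat2_const_mul, hfZ, hgT, hg0, ← dX_modeFun k n hg, ← dY_modeFun k n hf] at h0
    linear_combination h0
  · have e : (fun q => (1 / 2 : ℂ) * slice (pT f) x y q + ((-(1 / 2) * I) * slice (pX f) x y q +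
        ((1 / 2) * slice (pY g) x y q +
        (1 / 2 * (x - (a - I) / b)) * slice (pZ g) x y q))) = fun _ => 0 := by
      ext q
      rw [← h2 q.1 x y q.2]
      simp only [slice, V₂, V₁]
      ring
    have h0 := hat2_zero k n
    rw [← e, hat2_add _ _ (cm _ fT) ((cm _ fX).add ((cm _ gY).add (cm _ gZ))),
      hat2_add _ _ (cm _ fX) ((cm _ gY).add (cm _ gZ)),
      hat2_add _ _ (cm _ gY) (cm _ gZ)] at h0
    simp only [hat2_const_mul, hgZ, hfT, ← dX_modeFun k n hf, ← dY_modeFun k n hg] at h0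
    linear_combination h0

/-! ### Basic solutions and the dimension -/

/-- The kernel vector of the constant-coefficient system at the resonant frequency
`c = (l, m)`. Resonance with `l = 0` forces `m = 0`, where the equations leave `f` free and kill `g`. -/
noncomputable def vec (c : ℤ × ℤ) : ℂ × ℂ := if c.1 = 0 then (1, 0) else (-I * c.2 / c.1, 1)

theorem freq_snd_eq_zero {p q : ℤ} (hq : q ≠ 0) {c : ℤ × ℤ} (hc : c ∈ freq p q) (h : c.1 = 0) :
    c.2 = 0 := by
  have hc' : q * (c.2 ^ 2 + c.1 ^ 2) = 2 * p * c.1 := hc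
  rw [h] at hc'
  simpa [hq] using hc'

/-- The `2 × 2` system at frequencies `(k, l, m)` in `(t, x, y)` has a nonzero solution only when
`k = 0` and `(l, m)` is one of the resonant frequencies, and then the solutions are the multiples
of `vec (l, m)`. -/
theorem kernel_line (p q : ℤ) (hp : p ≠ 0) (hq : q ≠ 0) (b : ℝ)
    (hb : b = 8 * Real.pi * (p : ℝ) / (q : ℝ)) (k l m : ℤ) (α β : ℂ)
    (h1 : -((1 / 2) * (2 * Real.pi * m * I * α)) +
      (1 / 2) * (2 * Real.pi * k * I * β + I * (2 * Real.pi * l * I * β)) + (b / 4) * β = 0)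
    (h2 : (1 / 2) * (2 * Real.pi * k * I * α - I * (2 * Real.pi * l * I * α)) +
      (1 / 2) * (2 * Real.pi * m * I * β) = 0) :
    (α = 0 ∧ β = 0) ∨ (k = 0 ∧ (l, m) ∈ freq p q ∧
      ∃ r : ℂ, α = r * (vec (l, m)).1 ∧ β = r * (vec (l, m)).2) := by
  have hpR : (p : ℝ) ≠ 0 := by exact_mod_cast hp
  have hqR : (q : ℝ) ≠ 0 := by exact_mod_cast hq
  have hpi := Real.pi_ne_zero
  have hb0 : b ≠ 0 := by rw [hb]; positivity
  set D : ℂ := ((Real.pi ^ 2 * (m ^ 2 + k ^ 2 + l ^ 2) - b / 4 * Real.pi * l : ℝ) : ℂ) +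
    ((-(b / 4 * Real.pi * k) : ℝ) : ℂ) * I with hD
  have hα : D * α = 0 := by
    rw [hD]; push_cast
    linear_combination (Real.pi * m * I) * h1 - (Real.pi * (k * I - l) + b / 4) * h2 +
      (Real.pi ^ 2 * m ^ 2 * α + Real.pi ^ 2 * k ^ 2 * α - Real.pi * l * b / 4 * α -
        Real.pi ^ 2 * m * l * I * β - Real.pi ^ 2 * k * l * I * α + Real.pi ^ 2 * l ^ 2 * α) * I_sq
  have hβ : D * β = 0 := by
    rw [hD]; push_cast
    linear_combination (-(Real.pi * (k * I + l))) * h1 - (Real.pi * m * I) * h2 +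
      (-(Real.pi ^ 2 * m * l * I * α) + Real.pi ^ 2 * m ^ 2 * β + Real.pi ^ 2 * k * l * I * β +
        Real.pi ^ 2 * k ^ 2 * β + Real.pi ^ 2 * l ^ 2 * β) * I_sq
  by_cases hD0 : D = 0
  · have him := congrArg Complex.im hD0
    have hre := congrArg Complex.re hD0
    rw [hD] at him hre
    simp only [add_re, add_im, ofReal_re, ofReal_im, re_ofReal_mul, im_ofReal_mul, I_re, I_im,
      zero_re, zero_im] at him hre
    have hk : (k : ℝ) = 0 := by
      have : b / 4 * Real.pi * k = 0 := by linarith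
      simpa [hb0, hpi] using this
    have hk' : k = 0 := by exact_mod_cast hk
    have hfr : (l, m) ∈ freq p q := by
      change q * (m ^ 2 + l ^ 2) = 2 * p * l
      have : (q * (m ^ 2 + l ^ 2) : ℝ) = 2 * p * l := by
        rw [hk, hb] at hre
        field_simp at hre
        have hpi4 : (4 * Real.pi ^ 2) ≠ 0 := by positivity
        refine mul_left_cancel₀ hpi4 ?_
        linear_combination hre
      exact_mod_cast this
    by_cases hl : l = 0
    · have hm : m = 0 := freq_snd_eq_zero hq hfr hl
      refine Or.inr ⟨hk', hfr, α, by simp [vec, hl], ?_⟩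
      have hbC : (b : ℂ) ≠ 0 := by exact_mod_cast hb0
      subst hl hm hk'
      simpa [vec, hbC] using h1
    · refine Or.inr ⟨hk', hfr, β, ?_, by simp [vec, hl]⟩
      have hlC : (l : ℂ) ≠ 0 := by exact_mod_cast hl
      have hpiC : (Real.pi : ℂ) ≠ 0 := by exact_mod_cast hpi
      subst hk'
      simp only [vec, hl, if_false]
      field_simp
      push_cast at h2
      have : (Real.pi : ℂ) * (α * l + I * m * β) = 0 := by
        linear_combination h2 + (Real.pi * l * α) * I_sq
      have := (mul_eq_zero.1 this).resolve_left hpiC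
      linear_combination this
  · exact Or.inl ⟨(mul_eq_zero.1 hα).resolve_left hD0, (mul_eq_zero.1 hβ).resolve_left hD0⟩

/-- The basic solution at the frequency `c = (l, m)`: the exponential `exp(2πi (l x + m y))` times
the vector `vec c`. -/
noncomputable def basicSol (c : ℤ × ℤ) : F4 × F4 :=
  (fun _ x y _ => (vec c).1 * (chr c.1 x * chr c.2 y),
    fun _ x y _ => (vec c).2 * (chr c.1 x * chr c.2 y))

/-- Every solution is a combination of the basic solutions at the resonant frequencies. -/
theorem sol_eq_sum (a : ℝ) (p q : ℤ) (hp : p ≠ 0) (hq : q ≠ 0) (b : ℝ)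
    (hb : b = 8 * Real.pi * (p : ℝ) / (q : ℝ)) (hfin : (freq p q).Finite) {f g : F4}
    (h : (f, g) ∈ Sol a b) :
    ∃ r : ℤ × ℤ → ℂ, (f, g) = ∑ c ∈ hfin.toFinset, r c • basicSol c := by
  have hf : Smooth4 f := h.1
  have hg : Smooth4 g := h.2.1
  have pf : KTPeriodic f := h.2.2.1
  have pg : KTPeriodic g := h.2.2.2.1
  have hmode : ∀ k n, n ≠ 0 → modeFun k n f = 0 ∧ modeFun k n g = 0 := by
    intro k n hn
    have := mode_zero p q n k hp hq hn a b hb ⟨_, modeFun_mem k n hf pf⟩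
      ⟨_, modeFun_mem k n hg pg⟩ (fun x y => (mode_eqs h k n x y).1)
      (fun x y => (mode_eqs h k n x y).2)
    exact ⟨congrArg Subtype.val this.1, congrArg Subtype.val this.2⟩
  have perX : ∀ (k : ℤ) (f : F4), Smooth4 f → KTPeriodic f → ∀ x y,
      modeFun k 0 f (x + 1, y) = modeFun k 0 f (x, y) := by
    intro k f hf pf x y
    have := (modeFun_mem k 0 hf pf).2.2 x y
    rwa [neg_zero, chr_zero_left, one_mul] at this
  have perY : ∀ (k : ℤ) (f : F4), Smooth4 f → KTPeriodic f → ∀ x y,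
      modeFun k 0 f (x, y + 1) = modeFun k 0 f (x, y) :=
    fun k f hf pf => (modeFun_mem k 0 hf pf).2.1
  -- the `(x, y)`-coefficients of the modes with `n = 0`
  have hker : ∀ k l m, (hat2 l m (modeFun k 0 f) = 0 ∧ hat2 l m (modeFun k 0 g) = 0) ∨
      (k = 0 ∧ (l, m) ∈ freq p q ∧ ∃ r : ℂ, hat2 l m (modeFun k 0 f) = r * (vec (l, m)).1 ∧
        hat2 l m (modeFun k 0 g) = r * (vec (l, m)).2) := by
    intro k l m
    have sf := modeFun_contDiff k 0 hf
    have sg := modeFun_contDiff k 0 hg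
    have fX := dX_contDiff sf
    have gX := dX_contDiff sg
    have fY := dY_contDiff sf
    have gY := dY_contDiff sg
    have cm : ∀ (c : ℂ) {u : ℝ × ℝ → ℂ}, ContDiff ℝ ∞ u → ContDiff ℝ ∞ (fun p => c * u p) :=
      fun c u hu => contDiff_const.mul hu
    refine kernel_line p q hp hq b hb k l m _ _ ?_ ?_
    · have e : (fun q => (-(1 / 2) : ℂ) * dY (modeFun k 0 f) q +
          ((1 / 2 * (2 * Real.pi * k * I) + b / 4) * modeFun k 0 g q +
          (1 / 2 * I) * dX (modeFun k 0 g) q)) = fun _ => 0 := by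
        ext ⟨x, y⟩
        rw [← (mode_eqs h k 0 x y).1]
        push_cast
        ring
      have h0 := hat2_zero l m
      rw [← e, hat2_add _ _ (cm _ fY) ((cm _ sg).add (cm _ gX)),
        hat2_add _ _ (cm _ sg) (cm _ gX)] at h0
      simp only [hat2_const_mul, hat2_dX l m sg (perX k g hg pg),
        hat2_dY l m sf (perY k f hf pf)] at h0
      linear_combination h0
    · have e : (fun q => (1 / 2 * (2 * Real.pi * k * I) : ℂ) * modeFun k 0 f q +
          ((-(1 / 2) * I) * dX (modeFun k 0 f) q +
          (1 / 2) * dY (modeFun k 0 g) q)) = fun _ => 0 := by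
        ext ⟨x, y⟩
        rw [← (mode_eqs h k 0 x y).2]
        push_cast
        ring
      have h0 := hat2_zero l m
      rw [← e, hat2_add _ _ (cm _ sf) ((cm _ fX).add (cm _ gY)),
        hat2_add _ _ (cm _ fX) (cm _ gY)] at h0
      simp only [hat2_const_mul, hat2_dX l m sf (perX k f hf pf),
        hat2_dY l m sg (perY k g hg pg)] at h0
      linear_combination h0
  have hk0 : ∀ k n, (k, n) ≠ ((0, 0) : ℤ × ℤ) → modeFun k n f = 0 ∧ modeFun k n g = 0 := by
    intro k n hkn
    by_cases hn : n = 0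
    · subst hn
      have hk : k ≠ 0 := fun hk => hkn (by rw [hk])
      have hz : ∀ l m, hat2 l m (modeFun k 0 f) = 0 ∧ hat2 l m (modeFun k 0 g) = 0 := fun l m =>
        (hker k l m).resolve_right fun h => hk h.1
      constructor
      · ext ⟨x, y⟩
        rw [eq_sum_hat2 (modeFun_contDiff k 0 hf) (perX k f hf pf) (perY k f hf pf) ∅
          (fun c _ => (hz c.1 c.2).1)]
        simp
      · ext ⟨x, y⟩
        rw [eq_sum_hat2 (modeFun_contDiff k 0 hg) (perX k g hg pg) (perY k g hg pg) ∅
          (fun c _ => (hz c.1 c.2).2)]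
        simp
    · exact hmode k n hn
  have hrec : ∀ f : F4, Smooth4 f → KTPeriodic f →
      (∀ k n, (k, n) ≠ ((0, 0) : ℤ × ℤ) → modeFun k n f = 0) →
      ∀ t x y z, f t x y z = modeFun 0 0 f (x, y) := by
    intro f hf pf hz t x y z
    have := eq_sum_hat2 (slice_contDiff hf x y) (slice_per1 pf x y) (slice_per2 pf x y) {(0, 0)}
      (fun c hc => congrFun (hz c.1 c.2 (by simpa using hc)) (x, y)) t z
    rw [Finset.sum_singleton, chr_zero_left, chr_zero_left, mul_one, mul_one] at this
    exact this
  have hsel : ∀ c : ℤ × ℤ, ∃ r : ℂ, hat2 c.1 c.2 (modeFun 0 0 f) = r * (vec c).1 ∧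
      hat2 c.1 c.2 (modeFun 0 0 g) = r * (vec c).2 := by
    rintro ⟨l, m⟩
    rcases hker 0 l m with ⟨h1, h2⟩ | ⟨_, _, h⟩
    · exact ⟨0, by simp [h1], by simp [h2]⟩
    · exact h
  have hoff : ∀ c ∉ hfin.toFinset, hat2 c.1 c.2 (modeFun 0 0 f) = 0 ∧
      hat2 c.1 c.2 (modeFun 0 0 g) = 0 := fun c hc =>
    (hker 0 c.1 c.2).resolve_right fun h => hc (hfin.mem_toFinset.2 h.2.1)
  choose r hr1 hr2 using hsel
  refine ⟨r, ?_⟩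
  refine Prod.ext ?_ ?_
  · ext t x y z
    rw [Prod.fst_sum]
    simp only [Finset.sum_apply]
    rw [hrec f hf pf (fun k n hkn => (hk0 k n hkn).1), eq_sum_hat2 (modeFun_contDiff 0 0 hf)
      (perX 0 f hf pf) (perY 0 f hf pf) hfin.toFinset (fun c hc => (hoff c hc).1)]
    refine Finset.sum_congr rfl fun c _ => ?_
    rw [hr1, mul_assoc]; rfl
  · ext t x y z
    rw [Prod.snd_sum]
    simp only [Finset.sum_apply]
    rw [hrec g hg pg (fun k n hkn => (hk0 k n hkn).2), eq_sum_hat2 (modeFun_contDiff 0 0 hg)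
      (perX 0 g hg pg) (perY 0 g hg pg) hfin.toFinset (fun c hc => (hoff c hc).2)]
    refine Finset.sum_congr rfl fun c _ => ?_
    rw [hr2, mul_assoc]; rfl

theorem smooth4_lin {f g : F4} (hf : Smooth4 f) (hg : Smooth4 g) (c : ℂ) :
    Smooth4 (c • f + g) :=
  ContDiff.add (ContDiff.mul contDiff_const hf) hg

/-- The solution space is closed under `u, v ↦ c u + v`. -/
theorem sol_lin {a b : ℝ} {u v : F4 × F4} (hu : u ∈ Sol a b) (hv : v ∈ Sol a b) (c : ℂ) :
    c • u + v ∈ Sol a b := by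
  obtain ⟨f1, g1, pf1, pg1, h1, h1'⟩ := hu
  obtain ⟨f2, g2, pf2, pg2, h2, h2'⟩ := hv
  have eT : ∀ {f g : F4}, Smooth4 f → Smooth4 g → ∀ t x y z,
      pT (c • f + g) t x y z = c * pT f t x y z + pT g t x y z := fun hf hg t x y z =>
    (((hf.hasDerivAt_t t x y z).const_mul c).add (hg.hasDerivAt_t t x y z)).deriv
  have eX : ∀ {f g : F4}, Smooth4 f → Smooth4 g → ∀ t x y z,
      pX (c • f + g) t x y z = c * pX f t x y z + pX g t x y z := fun hf hg t x y z =>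
    (((hf.hasDerivAt_x t x y z).const_mul c).add (hg.hasDerivAt_x t x y z)).deriv
  have eY : ∀ {f g : F4}, Smooth4 f → Smooth4 g → ∀ t x y z,
      pY (c • f + g) t x y z = c * pY f t x y z + pY g t x y z := fun hf hg t x y z =>
    (((hf.hasDerivAt_y t x y z).const_mul c).add (hg.hasDerivAt_y t x y z)).deriv
  have eZ : ∀ {f g : F4}, Smooth4 f → Smooth4 g → ∀ t x y z,
      pZ (c • f + g) t x y z = c * pZ f t x y z + pZ g t x y z := fun hf hg t x y z =>
    (((hf.hasDerivAt_z t x y z).const_mul c).add (hg.hasDerivAt_z t x y z)).deriv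
  have ev : ∀ (f g : F4) t x y z, (c • f + g) t x y z = c * f t x y z + g t x y z :=
    fun f g t x y z => rfl
  have per : ∀ {f g : F4}, KTPeriodic f → KTPeriodic g → KTPeriodic (c • f + g) := by
    intro f g hf hg t x y z
    obtain ⟨a1, a2, a3, a4⟩ := hf t x y z
    obtain ⟨b1, b2, b3, b4⟩ := hg t x y z
    simp only [ev, a1, a2, a3, a4, b1, b2, b3, b4, and_self]
  refine ⟨smooth4_lin f1 f2 c, smooth4_lin g1 g2 c, per pf1 pf2, per pg1 pg2, ?_, ?_⟩
  · intro t x y z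
    have k1 := h1 t x y z
    have k2 := h2 t x y z
    change -V₂c a b (c • u.1 + v.1) t x y z + V₁c (c • u.2 + v.2) t x y z +
      ((b : ℂ) / 4) * (c • u.2 + v.2) t x y z = 0
    simp only [V₂c, V₁c, eT g1 g2, eX g1 g2, eY f1 f2, eZ f1 f2, ev] at k1 k2 ⊢
    linear_combination c * k1 + k2
  · intro t x y z
    have k1 := h1' t x y z
    have k2 := h2' t x y z
    change V₁ (c • u.1 + v.1) t x y z + V₂ a b (c • u.2 + v.2) t x y z = 0
    simp only [V₂, V₁, eT f1 f2, eX f1 f2, eY g1 g2, eZ g1 g2] at k1 k2 ⊢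
    linear_combination c * k1 + k2

theorem zero_mem_sol (a b : ℝ) : (0 : F4 × F4) ∈ Sol a b := by
  refine ⟨contDiff_const, contDiff_const, fun t x y z => ⟨rfl, rfl, rfl, rfl⟩,
    fun t x y z => ⟨rfl, rfl, rfl, rfl⟩, fun t x y z => ?_, fun t x y z => ?_⟩
  · simp [V₂c, V₁c, pT, pX, pY, pZ]
  · simp [V₂, V₁, pT, pX, pY, pZ]

theorem basicSol_mem (a : ℝ) (p q : ℤ) (hq : q ≠ 0) (b : ℝ)
    (hb : b = 8 * Real.pi * (p : ℝ) / (q : ℝ)) {c : ℤ × ℤ} (hc : c ∈ freq p q) :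
    basicSol c ∈ Sol a b := by
  have sm : ∀ w : ℂ, Smooth4 (fun _ x y _ => w * (chr c.1 x * chr c.2 y)) := by
    intro w
    have h1 := chr_contDiff c.1
    have h2 := chr_contDiff c.2
    have h3 : ContDiff ℝ ∞ (fun p : ℝ × ℝ × ℝ × ℝ => chr c.1 p.2.1) := h1.comp (by fun_prop)
    have h4 : ContDiff ℝ ∞ (fun p : ℝ × ℝ × ℝ × ℝ => chr c.2 p.2.2.1) := h2.comp (by fun_prop)
    exact contDiff_const.mul (h3.mul h4)
  have dx : ∀ (w : ℂ) (x y : ℝ), deriv (fun x => w * (chr c.1 x * chr c.2 y)) x =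
      w * ((2 * Real.pi * c.1 * I * chr c.1 x) * chr c.2 y) := fun w x y =>
    (((chr_hasDerivAt c.1 x).mul_const _).const_mul w).deriv
  have dy : ∀ (w : ℂ) (x y : ℝ), deriv (fun y => w * (chr c.1 x * chr c.2 y)) y =
      w * (chr c.1 x * (2 * Real.pi * c.2 * I * chr c.2 y)) := fun w x y =>
    (((chr_hasDerivAt c.2 y).const_mul _).const_mul w).deriv
  -- the two scalar equations satisfied by `vec c`
  have key : (-(Real.pi * c.2 * I) * (vec c).1 + (b / 4 - Real.pi * c.1) * (vec c).2 = 0) ∧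
      (Real.pi * c.1 * (vec c).1 + Real.pi * c.2 * I * (vec c).2 = 0) := by
    by_cases hl : c.1 = 0
    · have hm := freq_snd_eq_zero hq hc hl
      simp [vec, hl, hm]
    · have hlC : (c.1 : ℂ) ≠ 0 := by exact_mod_cast hl
      have hqC : (q : ℂ) ≠ 0 := by exact_mod_cast hq
      have hc' : q * (c.2 ^ 2 + c.1 ^ 2) = 2 * p * c.1 := hc
      have hcC : (q * (c.2 ^ 2 + c.1 ^ 2) : ℂ) = 2 * p * c.1 := by exact_mod_cast hc'
      simp only [vec, hl, if_false, hb]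
      push_cast
      constructor
      · field_simp
        rw [I_sq]
        linear_combination (-4 * Real.pi : ℂ) * hcC
      · field_simp
        ring
  refine ⟨sm _, sm _, ?_, ?_, ?_, ?_⟩
  · intro t x y z
    simp only [basicSol, chr_periodic, and_self]
  · intro t x y z
    simp only [basicSol, chr_periodic, and_self]
  · intro t x y z
    simp only [basicSol, V₂c, V₁c, pT, pX, pY, pZ, dx, dy, deriv_const]
    linear_combination (chr c.1 x * chr c.2 y) * key.1 +
      (Real.pi * c.1 * (vec c).2 * chr c.1 x * chr c.2 y) * I_sq
  · intro t x y z
    simp only [basicSol, V₂, V₁, pT, pX, pY, pZ, dx, dy, deriv_const]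
    linear_combination (chr c.1 x * chr c.2 y) * key.2 -
      (Real.pi * c.1 * (vec c).1 * chr c.1 x * chr c.2 y) * I_sq

/-- The character `(x, y) ↦ exp(2πi (l x + m y))` of `ℝ²`. -/
noncomputable def chi (c : ℤ × ℤ) : Multiplicative (ℝ × ℝ) →* ℂ where
  toFun g := chr c.1 g.toAdd.1 * chr c.2 g.toAdd.2
  map_one' := by simp [chr]
  map_mul' g h := by
    simp only [toAdd_mul, Prod.fst_add, Prod.snd_add, chr_add]; ring

theorem chr_injective {l l' : ℤ} (h : ∀ x, chr l x = chr l' x) : l = l' := by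
  have h1 := chr_hasDerivAt l 0
  rw [funext h] at h1
  have h2 := h1.unique (chr_hasDerivAt l' 0)
  have hpi : (Real.pi : ℂ) ≠ 0 := by exact_mod_cast Real.pi_ne_zero
  have e : ∀ j, chr j 0 = 1 := fun j => by simp [chr]
  simp only [e, mul_one] at h2
  have h3 := mul_left_cancel₀ (mul_ne_zero two_ne_zero hpi) (mul_right_cancel₀ I_ne_zero h2)
  exact_mod_cast h3

theorem chi_injective : Function.Injective chi := by
  intro c c' h
  have e : ∀ j, chr j 0 = 1 := fun j => by simp [chr]
  have h1 : ∀ x y : ℝ, chr c.1 x * chr c.2 y = chr c'.1 x * chr c'.2 y := fun x y =>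
    DFunLike.congr_fun h (Multiplicative.ofAdd (x, y))
  refine Prod.ext (chr_injective fun x => ?_) (chr_injective fun y => ?_)
  · simpa [e] using h1 x 0
  · simpa [e] using h1 0 y

/-- Follows from Dedekind's independence of characters, since no `vec c` is zero. -/
theorem basicSol_linearIndependent : LinearIndependent ℂ basicSol := by
  have hli : LinearIndependent ℂ (fun c => (chi c : Multiplicative (ℝ × ℝ) → ℂ)) :=
    (linearIndependent_monoidHom (Multiplicative (ℝ × ℝ)) ℂ).comp chi chi_injective
  rw [linearIndependent_iff'] at hli ⊢
  intro s r hr c hc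
  have h1 := hli s (fun c => r c * (vec c).1) (by
    ext g
    have := congrFun (congrFun (congrFun (congrFun (congrArg Prod.fst hr) 0) g.toAdd.1)
      g.toAdd.2) 0
    rw [Prod.fst_sum] at this
    simp only [Finset.sum_apply] at this ⊢
    refine Eq.trans (Finset.sum_congr rfl fun c _ => ?_) this
    exact mul_assoc _ _ _) c hc
  have h2 := hli s (fun c => r c * (vec c).2) (by
    ext g
    have := congrFun (congrFun (congrFun (congrFun (congrArg Prod.snd hr) 0) g.toAdd.1)
      g.toAdd.2) 0
    rw [Prod.snd_sum] at this
    simp only [Finset.sum_apply] at this ⊢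
    refine Eq.trans (Finset.sum_congr rfl fun c _ => ?_) this
    exact mul_assoc _ _ _) c hc
  by_cases hl : c.1 = 0
  · simpa [vec, hl] using h1
  · simpa [vec, hl] using h2

/-- The basic solutions at the resonant frequencies form a basis of the solution space. -/
theorem hasDim_sol (a : ℝ) (p q : ℤ) (hp : p ≠ 0) (hq : q ≠ 0) (b : ℝ)
    (hb : b = 8 * Real.pi * (p : ℝ) / (q : ℝ)) (hfin : (freq p q).Finite) :
    HasDimOver (Sol a b) (freq p q).ncard := by
  have : Finite (freq p q) := hfin
  let e : freq p q ≃ Fin (freq p q).ncard := Finite.equivFinOfCardEq rfl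
  refine ⟨fun i => basicSol (e.symm i), ?_, ?_⟩
  · exact basicSol_linearIndependent.comp (fun i => (e.symm i : ℤ × ℤ))
      (Subtype.val_injective.comp e.symm.injective)
  · apply Set.Subset.antisymm
    · intro u hu
      refine Submodule.span_induction ?_ (zero_mem_sol a b) ?_ ?_ hu
      · rintro _ ⟨i, rfl⟩
        exact basicSol_mem a p q hq b hb (e.symm i).2
      · intro u v _ _ hu hv
        simpa using sol_lin hu hv 1
      · intro c u _ hu
        simpa using sol_lin hu (zero_mem_sol a b) c
    · rintro ⟨f, g⟩ h
      obtain ⟨r, hr⟩ := sol_eq_sum a p q hp hq b hb hfin h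
      rw [hr]
      refine Submodule.sum_mem _ fun c hc => Submodule.smul_mem _ _ (Submodule.subset_span ?_)
      exact ⟨e ⟨c, hfin.mem_toFinset.1 hc⟩, by simp⟩

/-- Holt–Zhang: for `b = 8πp/q` with `gcd(p,q) = 1`, `p ≠ 0`,
`1 ≤ q ≤ 5`, and `p² = 2^α₀ · ∏ pᵢ^αᵢ · ∏ qⱼ^βⱼ` with the `pᵢ` distinct primes `≡ 3 (mod 4)`
and the `qⱼ` distinct primes `≡ 1 (mod 4)`, the space `𝒮(a,b)` is finite dimensional of
dimension `4∏(βⱼ+1)`, `2∏(βⱼ+1)`, or `∏(βⱼ+1)` according to `q = 1`, `q = 2`, or `q ∈ {3,4,5}`. -/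
theorem hodge_number_h01_of_rational_d
    (a : ℝ) (p q : ℤ) (hcop : IsCoprime p q) (hp : p ≠ 0) (hq1 : 1 ≤ q) (hq5 : q ≤ 5)
    (b : ℝ) (hb : b = 8 * Real.pi * (p : ℝ) / (q : ℝ))
    (α₀ s t : ℕ) (pr : Fin s → ℕ) (α : Fin s → ℕ) (qr : Fin t → ℕ) (β : Fin t → ℕ)
    (hprP : ∀ i, Nat.Prime (pr i)) (hpr3 : ∀ i, pr i % 4 = 3)
    (hprInj : Function.Injective pr)
    (hqrP : ∀ j, Nat.Prime (qr j)) (hqr1 : ∀ j, qr j % 4 = 1)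
    (hqrInj : Function.Injective qr)
    (hfact : p ^ 2 =
      2 ^ α₀ * (∏ i, (pr i : ℤ) ^ α i) * ∏ j, (qr j : ℤ) ^ β j) :
    HasDimOver (Sol a b)
      ((if q = 1 then 4 else if q = 2 then 2 else 1) * ∏ j, (β j + 1)) := by
  obtain ⟨hfin, hcard⟩ := ncard_freq p q hcop hq1 hq5 (∏ j, (β j + 1))
    (ncard_normSet_sq p α₀ s t pr α qr β hprP hpr3 hprInj hqrP hqr1 hqrInj hfact)
  rw [← hcard]
  exact hasDim_sol a p q hp (by omega) b hb hfin
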